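/- arXiv:1310.5729 — 2 statements merged into one kernel-verified Lean document; each statement's English description precedes it below -/
import Mathlib

section
/- Let d ≥ 1 and let A and B be subsets of ℤ^d such that the upper density of A equals α > 0 and the Banach density of B is positive. Then A + B is upper syndetic of level α; that is, there exists m ∈ ℕ such that for all k ∈ ℕ, the upper density of the set {z ∈ ℤ^d : z + [-k,k]^d ⊆ A + B + [-m,m]^d} is at least α. -/
/-!
The proof is elementary and rests on one dichotomy: does fattening `A` by a cube raise its upper
density?

* If no `A + [-r, r]^d` has upper density above `α`, then `A` is almost invariant under every
  bounded translation (along the scales where its density is near `α`), so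
  `{z | z + [-k, k]^d ⊆ A}` already has upper density at least `α` for every `k`
  (`le_upperDensity_of_invariant`). One point of `B` then suffices.
* If `A' = A + [-r, r]^d` has upper density `α' > α`, put `η = (α' - α) / 8`. A set of positive
  Banach density becomes, after fattening by a suitable fixed cube, of relative density at
  least `1 - η` in some arbitrarily large cubes (`exists_fat`). If `A'` has relative density
  above `η` in the cube around `z - x`, where `x` is the centre of such a cube, then by pigeonhole
  `z` and its `k`-neighbours lie in the sum of the two fattened sets (`cubeAt_subset_add`).
  Averaging over `z` shows that such `z` have upper density at least `α' - 8η = α`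
  (`le_upperDensity_of_fat`). The slack between `α'` and `α` makes the fattening of `B` independent of `k`.

Both averaging steps use the same double count, `double_count`.
-/

open Filter Pointwise

/-- The `d`-dimensional cube `[-m, m]^d` in `ℤ^d`. -/
def cube (d m : ℕ) : Set (Fin d → ℤ) :=
  Set.Icc (fun _ => -(m : ℤ)) (fun _ => (m : ℤ))

/-- The translated cube `z + [-k, k]^d`. -/
def cubeAt (d k : ℕ) (z : Fin d → ℤ) : Set (Fin d → ℤ) :=
  Set.Icc (fun i => z i - (k : ℤ)) (fun i => z i + (k : ℤ))

/-- Upper asymptotic density of `A ⊆ ℤ^d`. -/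
noncomputable def upperDensity (d : ℕ) (A : Set (Fin d → ℤ)) : ℝ :=
  limsup (fun n : ℕ => (Set.ncard (A ∩ cube d n) : ℝ) / (2 * (n : ℝ) + 1) ^ d) atTop

/-- (Upper) Banach density of `A ⊆ ℤ^d`; the limit defining it exists, so we may
express it as a `limsup`. -/
noncomputable def banachDensity (d : ℕ) (A : Set (Fin d → ℤ)) : ℝ :=
  limsup (fun n : ℕ =>
    (⨆ x : Fin d → ℤ, (Set.ncard (A ∩ cubeAt d n x) : ℝ)) / (2 * (n : ℝ) + 1) ^ d) atTop

/-! ### Counting points in cubes -/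

/-- The cube `x + [-n, n]^d` as a finset. -/
noncomputable def boxF (d n : ℕ) (x : Fin d → ℤ) : Finset (Fin d → ℤ) :=
  Finset.Icc (fun i => x i - (n : ℤ)) (fun i => x i + (n : ℤ))

open Classical in
/-- The number of points of `A` in the cube `x + [-n, n]^d`. -/
noncomputable def cnt (d : ℕ) (A : Set (Fin d → ℤ)) (n : ℕ) (x : Fin d → ℤ) : ℕ :=
  ((boxF d n x).filter (· ∈ A)).card

/-- The number of points of a cube `x + [-n, n]^d`, as a real number. -/
noncomputable def vol (d n : ℕ) : ℝ := (2 * (n : ℝ) + 1) ^ d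

lemma vol_pos (d n : ℕ) : 0 < vol d n := by unfold vol; positivity

lemma mem_boxF {d n : ℕ} {x y : Fin d → ℤ} :
    y ∈ boxF d n x ↔ ∀ i, x i - n ≤ y i ∧ y i ≤ x i + n := by
  simp only [boxF, Finset.mem_Icc, Pi.le_def, forall_and]

lemma mem_cubeAt {d n : ℕ} {x y : Fin d → ℤ} :
    y ∈ cubeAt d n x ↔ ∀ i, x i - n ≤ y i ∧ y i ≤ x i + n := by
  simp only [cubeAt, Set.mem_Icc, Pi.le_def, forall_and]

lemma mem_cube {d n : ℕ} {y : Fin d → ℤ} :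
    y ∈ cube d n ↔ ∀ i, -(n : ℤ) ≤ y i ∧ y i ≤ n := by
  simp only [cube, Set.mem_Icc, Pi.le_def, forall_and]

lemma card_boxF (d n : ℕ) (x : Fin d → ℤ) : ((boxF d n x).card : ℝ) = vol d n := by
  have h : (boxF d n x).card = (2 * n + 1) ^ d := by
    have : ∀ i : Fin d, (x i + (n : ℤ) + 1 - (x i - n)).toNat = 2 * n + 1 := by intro i; omega
    simp [boxF, Pi.card_Icc, this]
  rw [h, vol]; push_cast; rfl

lemma cnt_le_vol (d : ℕ) (A : Set (Fin d → ℤ)) (n : ℕ) (x : Fin d → ℤ) :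
    (cnt d A n x : ℝ) ≤ vol d n := by
  classical
  rw [← card_boxF d n x]
  exact_mod_cast Finset.card_filter_le _ _

lemma cnt_mono {d : ℕ} {A B : Set (Fin d → ℤ)} {n m : ℕ} {x y : Fin d → ℤ} (h : A ⊆ B)
    (hb : boxF d n x ⊆ boxF d m y) : cnt d A n x ≤ cnt d B m y := by
  classical
  unfold cnt
  apply Finset.card_le_card
  intro z hz
  simp only [Finset.mem_filter] at hz ⊢
  exact ⟨hb hz.1, h hz.2⟩

lemma ncard_cubeAt (d : ℕ) (A : Set (Fin d → ℤ)) (n : ℕ) (x : Fin d → ℤ) :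
    Set.ncard (A ∩ cubeAt d n x) = cnt d A n x := by
  classical
  rw [cnt, ← Set.ncard_coe_finset]
  congr 1
  ext y
  simp [mem_boxF, mem_cubeAt, and_comm]

lemma ncard_cube (d : ℕ) (A : Set (Fin d → ℤ)) (n : ℕ) :
    Set.ncard (A ∩ cube d n) = cnt d A n 0 := by
  rw [← ncard_cubeAt]
  congr 2
  ext y
  simp [mem_cube, mem_cubeAt]

/-! ### Densities in terms of counting -/

lemma upperDensity_eq (d : ℕ) (A : Set (Fin d → ℤ)) :
    upperDensity d A = limsup (fun n : ℕ => (cnt d A n 0 : ℝ) / vol d n) atTop := by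
  simp only [upperDensity, ncard_cube, vol]

lemma banachDensity_eq (d : ℕ) (A : Set (Fin d → ℤ)) :
    banachDensity d A =
      limsup (fun n : ℕ => (⨆ x : Fin d → ℤ, (cnt d A n x : ℝ)) / vol d n) atTop := by
  simp only [banachDensity, ncard_cubeAt, vol]

lemma bddAbove_cnt (d : ℕ) (A : Set (Fin d → ℤ)) (n : ℕ) :
    BddAbove (Set.range fun x : Fin d → ℤ => (cnt d A n x : ℝ)) :=
  ⟨vol d n, by rintro _ ⟨x, rfl⟩; exact cnt_le_vol d A n x⟩

lemma isBoundedUnder_of_mem {u : ℕ → ℝ} (h1 : ∀ n, u n ≤ 1) :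
    IsBoundedUnder (· ≤ ·) atTop u :=
  isBoundedUnder_of ⟨1, h1⟩

lemma isCobounded_of_mem {u : ℕ → ℝ} (h0 : ∀ n, 0 ≤ u n) :
    IsCoboundedUnder (· ≤ ·) atTop u :=
  IsBoundedUnder.isCoboundedUnder_le (isBoundedUnder_of ⟨0, h0⟩)

lemma dens_nonneg (d : ℕ) (A : Set (Fin d → ℤ)) (n : ℕ) :
    0 ≤ (cnt d A n 0 : ℝ) / vol d n := div_nonneg (Nat.cast_nonneg _) (vol_pos d n).le

lemma dens_le_one (d : ℕ) (A : Set (Fin d → ℤ)) (n : ℕ) :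
    (cnt d A n 0 : ℝ) / vol d n ≤ 1 := (div_le_one (vol_pos d n)).2 (cnt_le_vol d A n 0)

lemma upperDensity_le_one (d : ℕ) (A : Set (Fin d → ℤ)) : upperDensity d A ≤ 1 := by
  rw [upperDensity_eq]
  exact limsup_le_of_le (isCobounded_of_mem (dens_nonneg d A))
    (Eventually.of_forall (dens_le_one d A))

lemma frequently_of_lt_upperDensity {d : ℕ} {A : Set (Fin d → ℤ)} {c : ℝ}
    (h : c < upperDensity d A) : ∃ᶠ n in atTop, c * vol d n < cnt d A n 0 := by
  rw [upperDensity_eq] at h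
  refine (frequently_lt_of_lt_limsup (isCobounded_of_mem (dens_nonneg d A)) h).mono ?_
  intro n hn
  exact (lt_div_iff₀ (vol_pos d n)).1 hn

lemma eventually_of_upperDensity_lt {d : ℕ} {A : Set (Fin d → ℤ)} {c : ℝ}
    (h : upperDensity d A < c) : ∀ᶠ n in atTop, (cnt d A n 0 : ℝ) < c * vol d n := by
  rw [upperDensity_eq] at h
  refine (eventually_lt_of_limsup_lt h (isBoundedUnder_of_mem (dens_le_one d A))).mono ?_
  intro n hn
  exact (div_lt_iff₀ (vol_pos d n)).1 hn

lemma le_upperDensity_of_frequently {d : ℕ} {A : Set (Fin d → ℤ)} {c : ℝ}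
    (h : ∃ᶠ n in atTop, c * vol d n ≤ cnt d A n 0) : c ≤ upperDensity d A := by
  rw [upperDensity_eq]
  refine le_limsup_of_frequently_le (h.mono ?_) (isBoundedUnder_of_mem (dens_le_one d A))
  intro n hn
  exact (le_div_iff₀ (vol_pos d n)).2 hn

/-! ### Volume growth and double counting -/

/-- Enlarging a large cube by a bounded amount changes its volume by a factor close to `1`. -/
lemma eventually_vol_add_le (d Y : ℕ) {ε : ℝ} (hε : 0 < ε) :
    ∀ᶠ p : ℕ in atTop, vol d (p + Y) ≤ (1 + ε) * vol d p := by
  have h0 : Tendsto (fun p : ℕ => (2 * (p : ℝ) + 1)) atTop atTop :=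
    tendsto_atTop_add_const_right _ _ (tendsto_natCast_atTop_atTop.const_mul_atTop two_pos)
  have h1 : Tendsto (fun p : ℕ => (1 + (2 * (Y : ℝ)) / (2 * (p : ℝ) + 1)) ^ d) atTop
      (nhds ((1 + 0) ^ d)) :=
    ((tendsto_const_nhds.div_atTop h0).const_add 1).pow d
  rw [add_zero, one_pow] at h1
  filter_upwards [h1.eventually_lt_const (show (1 : ℝ) < 1 + ε by linarith)] with p hp
  have hv : vol d (p + Y) = (1 + (2 * (Y : ℝ)) / (2 * (p : ℝ) + 1)) ^ d * vol d p := by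
    unfold vol
    rw [← mul_pow]
    congr 1
    have : (2 * (p : ℝ) + 1) ≠ 0 := by positivity
    field_simp
    push_cast
    ring
  rw [hv]
  exact mul_le_mul_of_nonneg_right hp.le (vol_pos d p).le

/-- Every point of `E` in the `p`-cube at `x` lies in exactly `vol d M` of the `M`-cubes whose
centre is in the `(p + M)`-cube at `x`. -/
lemma double_count (d : ℕ) (E : Set (Fin d → ℤ)) (p M : ℕ) (x : Fin d → ℤ) :
    vol d M * cnt d E p x ≤ ∑ u ∈ boxF d (p + M) x, (cnt d E M u : ℝ) := by
  classical
  set s := (boxF d p x).filter (· ∈ E) with hs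
  have h1 : ∀ a ∈ s, (((boxF d (p + M) x).filter (fun u => a ∈ boxF d M u)).card : ℝ)
      = vol d M := by
    intro a ha
    rw [← card_boxF d M a]
    congr 2
    ext u
    simp only [hs, Finset.mem_filter, mem_boxF] at ha ⊢
    constructor
    · rintro ⟨-, h⟩ i
      have := h i
      constructor <;> linarith
    · intro h
      refine ⟨fun i => ?_, fun i => ?_⟩
      · have := h i
        have := ha.1 i
        push_cast
        constructor <;> linarith
      · have := h i
        constructor <;> linarith
  have h2 : (∑ u ∈ boxF d (p + M) x, ((s.filter (fun a => a ∈ boxF d M u)).card : ℝ))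
      = ∑ a ∈ s, (((boxF d (p + M) x).filter (fun u => a ∈ boxF d M u)).card : ℝ) := by
    exact_mod_cast (Finset.sum_card_bipartiteAbove_eq_sum_card_bipartiteBelow
      (s := boxF d (p + M) x) (t := s) (fun u a => a ∈ boxF d M u))
  calc vol d M * cnt d E p x = ∑ a ∈ s, vol d M := by
        rw [Finset.sum_const, nsmul_eq_mul, mul_comm]; rfl
    _ = ∑ u ∈ boxF d (p + M) x, ((s.filter (fun a => a ∈ boxF d M u)).card : ℝ) := by
        rw [h2]; exact (Finset.sum_congr rfl h1).symm
    _ ≤ _ := by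
        apply Finset.sum_le_sum
        intro u _
        rw [cnt]
        norm_cast
        apply Finset.card_le_card
        intro a ha
        simp only [hs, Finset.mem_filter] at ha ⊢
        exact ⟨ha.2, ha.1.2⟩

/-! ### The case where fattening `A` raises its density -/

/-- A set of positive Banach density, fattened by a suitable cube, has relative density at least
`1 - η` in some arbitrarily large cubes. Fix a scale `m` at which no cube is much denser than
`β = banachDensity d B`; a large cube of density about `β` can then contain only few centres of
`m`-cubes missing `B`. -/
lemma exists_fat {d : ℕ} {B : Set (Fin d → ℤ)} (hB : 0 < banachDensity d B) {η : ℝ}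
    (hη : 0 < η) (hη1 : η ≤ 1) :
    ∃ m : ℕ, ∃ᶠ L in atTop, ∃ x, (1 - η) * vol d L ≤ cnt d (B + cube d m) L x := by
  classical
  set β := banachDensity d B with hβ
  rw [banachDensity_eq] at hβ
  set t := η / 4 with ht
  have ht0 : 0 < t := by positivity
  have hb0 : ∀ n : ℕ, 0 ≤ (⨆ x : Fin d → ℤ, (cnt d B n x : ℝ)) / vol d n := fun n =>
    div_nonneg (Real.iSup_nonneg fun _ => Nat.cast_nonneg _) (vol_pos d n).le
  have hb1 : ∀ n : ℕ, (⨆ x : Fin d → ℤ, (cnt d B n x : ℝ)) / vol d n ≤ 1 := fun n =>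
    (div_le_one (vol_pos d n)).2 (ciSup_le fun x => cnt_le_vol d B n x)
  have hlt : limsup (fun n : ℕ => (⨆ x : Fin d → ℤ, (cnt d B n x : ℝ)) / vol d n) atTop
      < β * (1 + t) := by rw [← hβ]; nlinarith
  have hgt : β * (1 - t)
      < limsup (fun n : ℕ => (⨆ x : Fin d → ℤ, (cnt d B n x : ℝ)) / vol d n) atTop := by
    rw [← hβ]; nlinarith
  obtain ⟨m, hm⟩ := (eventually_lt_of_limsup_lt hlt (isBoundedUnder_of_mem hb1)).exists
  have hm' : ∀ u, (cnt d B m u : ℝ) ≤ β * (1 + t) * vol d m := fun u =>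
    (le_ciSup (bddAbove_cnt d B m) u).trans ((div_lt_iff₀ (vol_pos d m)).1 hm).le
  refine ⟨m, ?_⟩
  have hfreq := frequently_lt_of_lt_limsup (isCobounded_of_mem hb0) hgt
  refine (tendsto_add_atTop_nat m).frequently
    ((hfreq.and_eventually (eventually_vol_add_le d m ht0)).mono ?_)
  rintro p ⟨hp, hvol⟩
  rw [lt_div_iff₀ (vol_pos d p)] at hp
  obtain ⟨x, hx⟩ := exists_lt_of_lt_ciSup hp
  refine ⟨x, ?_⟩
  set g := cnt d (B + cube d m) (p + m) x with hg
  have hup : ∑ u ∈ boxF d (p + m) x, (cnt d B m u : ℝ) ≤ g * (β * (1 + t) * vol d m) := by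
    have : ∀ u ∈ boxF d (p + m) x, (cnt d B m u : ℝ) ≤
        if u ∈ B + cube d m then β * (1 + t) * vol d m else 0 := by
      intro u _
      split_ifs with hu
      · exact hm' u
      · have : cnt d B m u = 0 := by
          rw [cnt, Finset.card_eq_zero, Finset.filter_eq_empty_iff]
          intro b hb hbB
          apply hu
          refine ⟨b, hbB, u - b, ?_, by simp⟩
          rw [mem_boxF] at hb
          rw [mem_cube]
          intro i
          have := hb i
          simp only [Pi.sub_apply]
          constructor <;> linarith
        simp [this]
    refine (Finset.sum_le_sum this).trans ?_
    rw [← Finset.sum_filter, Finset.sum_const, nsmul_eq_mul, hg, cnt]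
  have hdc := (double_count d B p m x).trans hup
  have hV := vol_pos d m
  have hVp := vol_pos d p
  have h1 : (1 - t) * vol d p ≤ g * (1 + t) := by
    have : (vol d m * β) * ((1 - t) * vol d p) ≤ (vol d m * β) * (g * (1 + t)) := by
      nlinarith [mul_lt_mul_of_pos_left hx hV]
    exact le_of_mul_le_mul_left this (by positivity)
  have hg0 : (0 : ℝ) ≤ g := Nat.cast_nonneg _
  have h2 : (1 - η) * vol d (p + m) ≤ (1 - η) * ((1 + t) * vol d p) :=
    mul_le_mul_of_nonneg_left hvol (by linarith)
  refine h2.trans ?_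
  have h4 : (1 - η) * (1 + t) * (1 + t) ≤ 1 - t := by
    have : η = 4 * t := by rw [ht]; ring
    rw [this]; nlinarith [mul_pos ht0 ht0, mul_pos (mul_pos ht0 ht0) ht0]
  have h5 : (1 + t) * ((1 - η) * ((1 + t) * vol d p)) ≤ (1 + t) * g := by
    nlinarith [mul_le_mul_of_nonneg_right h4 hVp.le]
  exact le_of_mul_le_mul_left h5 (by linarith)

/-- If `B` misses at most a proportion `η` of the cube at `x`, and `A` has proportion more than `η`
in the reflected and slightly smaller cube at `z - x`, then by pigeonhole `A` meets `y - B` for all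
`y` in the `k`-cube at `z`. -/
lemma cubeAt_subset_add {d : ℕ} {A B : Set (Fin d → ℤ)} {k M : ℕ} {x z : Fin d → ℤ} {η : ℝ}
    (hB : (1 - η) * vol d (M + k) ≤ cnt d B (M + k) x)
    (hA : η * vol d (M + k) < cnt d A M (z - x)) : cubeAt d k z ⊆ A + B := by
  classical
  intro y hy
  rw [mem_cubeAt] at hy
  set U := (boxF d (M + k) x).filter (· ∈ B) with hU
  set V := ((boxF d M (z - x)).filter (· ∈ A)).image (fun a => y - a) with hVdef
  have hVc : V.card = cnt d A M (z - x) :=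
    Finset.card_image_of_injective _ (fun a b h => sub_right_injective h)
  have hVs : V ⊆ boxF d (M + k) x := by
    intro v hv
    simp only [hVdef, Finset.mem_image, Finset.mem_filter, mem_boxF] at hv
    obtain ⟨a, ⟨ha, -⟩, rfl⟩ := hv
    rw [mem_boxF]
    intro i
    have := ha i
    have := hy i
    simp only [Pi.sub_apply] at *
    push_cast
    constructor <;> linarith
  have hcard : (boxF d (M + k) x).card < U.card + V.card := by
    have hUc : U.card = cnt d B (M + k) x := rfl
    have : ((boxF d (M + k) x).card : ℝ) < (U.card : ℝ) + (V.card : ℝ) := by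
      rw [card_boxF, hVc, hUc]; linarith
    exact_mod_cast this
  obtain ⟨b, hb⟩ := Finset.inter_nonempty_of_card_lt_card_add_card
    (Finset.filter_subset _ _) hVs hcard
  rw [Finset.mem_inter] at hb
  obtain ⟨hbU, hbV⟩ := hb
  simp only [hVdef, Finset.mem_image, Finset.mem_filter] at hbV
  obtain ⟨a, ⟨-, ha⟩, rfl⟩ := hbV
  exact ⟨a, ha, y - a, (Finset.mem_filter.1 hbU).2, by simp⟩

/-- If `B` has proportion at least `1 - η` in some arbitrarily large cubes, then the `k`-interior
of `A + B` has upper density at least that of `A`, up to a loss of `8η` independent of `k`. -/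
lemma le_upperDensity_of_fat {d : ℕ} {A B : Set (Fin d → ℤ)} {η : ℝ} (hη : 0 < η)
    (hB : ∃ᶠ L in atTop, ∃ x, (1 - η) * vol d L ≤ cnt d B L x) (k : ℕ) :
    upperDensity d A - 8 * η ≤ upperDensity d {z | cubeAt d k z ⊆ A + B} := by
  classical
  set S : Set (Fin d → ℤ) := {z | cubeAt d k z ⊆ A + B} with hS
  obtain ⟨M₀, hM₀⟩ := eventually_atTop.1 (eventually_vol_add_le d k (ε := 1) one_pos)
  obtain ⟨L, ⟨x, hx⟩, hL⟩ := (hB.and_eventually (eventually_ge_atTop (M₀ + k))).exists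
  obtain ⟨M, rfl⟩ : ∃ M, L = M + k := ⟨L - k, by omega⟩
  have hMk := hM₀ M (by omega)
  obtain ⟨X, hX⟩ : ∃ X : ℕ, ∀ i, |x i| ≤ X := by
    refine ⟨∑ i, (x i).natAbs, fun i => ?_⟩
    rw [Int.abs_eq_natAbs]
    exact_mod_cast Finset.single_le_sum (f := fun i => (x i).natAbs)
      (fun _ _ => Nat.zero_le _) (Finset.mem_univ i)
  have hα : upperDensity d A - η < upperDensity d A := by linarith
  have hα1 := upperDensity_le_one d A
  set α := upperDensity d A
  apply le_upperDensity_of_frequently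
  refine (tendsto_add_atTop_nat (M + X)).frequently
    (((frequently_of_lt_upperDensity hα).and_eventually
      (eventually_vol_add_le d (M + X) hη)).mono ?_)
  rintro p ⟨hp, hvol⟩
  set Gs := (boxF d (p + M) 0).filter (fun u => η * vol d (M + k) < cnt d A M u) with hGs
  -- Translating the good centres by `x` puts them into `S`.
  have hG : Gs.card ≤ cnt d S (p + (M + X)) 0 := by
    rw [cnt, ← Finset.card_image_of_injective Gs (add_left_injective x)]
    apply Finset.card_le_card
    intro z hz
    obtain ⟨u, hu, rfl⟩ := Finset.mem_image.1 hz
    rw [hGs, Finset.mem_filter, mem_boxF] at hu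
    rw [Finset.mem_filter, mem_boxF]
    constructor
    · intro i
      have h1 := hu.1 i
      have h2 := abs_le.1 (hX i)
      simp only [Pi.zero_apply, Pi.add_apply] at *
      push_cast at h1 ⊢
      constructor <;> linarith
    · exact cubeAt_subset_add hx (by simpa using hu.2)
  have hup : ∑ u ∈ boxF d (p + M) 0, (cnt d A M u : ℝ) ≤
      Gs.card * vol d M + vol d (p + M) * (η * vol d (M + k)) := by
    have : ∀ u ∈ boxF d (p + M) 0, (cnt d A M u : ℝ) ≤
        (if η * vol d (M + k) < cnt d A M u then vol d M else 0) + η * vol d (M + k) := by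
      intro u _
      have hpos := mul_pos hη (vol_pos d (M + k))
      split_ifs with hu
      · linarith [cnt_le_vol d A M u]
      · linarith
    refine (Finset.sum_le_sum this).trans ?_
    rw [Finset.sum_add_distrib, ← Finset.sum_filter, Finset.sum_const, Finset.sum_const,
      nsmul_eq_mul, nsmul_eq_mul, card_boxF]
  have hdc := (double_count d A p M 0).trans hup
  have hVM := vol_pos d M
  have hVp := vol_pos d p
  have hVpM := vol_pos d (p + M)
  have hmono : vol d (p + M) ≤ vol d (p + (M + X)) := by
    unfold vol
    gcongr
    linarith [(Nat.cast_nonneg X : (0 : ℝ) ≤ X)]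
  have h1 : (cnt d A p 0 : ℝ) ≤ Gs.card + 2 * η * vol d (p + M) := by
    have : vol d M * cnt d A p 0 ≤ vol d M * (Gs.card + 2 * η * vol d (p + M)) := by
      nlinarith [mul_le_mul_of_nonneg_left hMk (mul_pos hVpM hη).le]
    exact le_of_mul_le_mul_left this hVM
  have hG' : (Gs.card : ℝ) ≤ cnt d S (p + (M + X)) 0 := by exact_mod_cast hG
  set W := vol d (p + (M + X))
  have h2 : (α - η) * vol d p ≤ cnt d S (p + (M + X)) 0 + 2 * η * W := by
    nlinarith [mul_le_mul_of_nonneg_left hmono hη.le]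
  have hW : 0 < W := vol_pos d _
  by_cases h8 : α - 8 * η ≤ 0
  · exact (mul_nonpos_of_nonpos_of_nonneg h8 hW.le).trans (Nat.cast_nonneg _)
  · push Not at h8
    have h3 : (α - 6 * η) * W ≤ (α - 6 * η) * ((1 + η) * vol d p) :=
      mul_le_mul_of_nonneg_left hvol (by linarith)
    have h4 : (α - 6 * η) * (1 + η) ≤ α - η := by nlinarith
    nlinarith [mul_le_mul_of_nonneg_right h4 hVp.le]

/-! ### The case where fattening `A` does not raise its density -/

/-- If fattening `A` by the `k`-cube does not raise its upper density, then `A` is almost invariant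
under translations from that cube, so its `k`-interior has the same upper density. -/
lemma le_upperDensity_of_invariant {d : ℕ} {A : Set (Fin d → ℤ)} (k : ℕ)
    (h : upperDensity d (A + cube d k) ≤ upperDensity d A) :
    upperDensity d A ≤ upperDensity d {z | cubeAt d k z ⊆ A} := by
  classical
  set T : Set (Fin d → ℤ) := {z | cubeAt d k z ⊆ A} with hT
  have hα1 := upperDensity_le_one d A
  set α := upperDensity d A with hα
  have hvk := vol_pos d k
  -- The loss is `ε` from the density of `A` at the chosen scale, plus, for each of the `vol d k`
  -- translations, `(α + ε)(1 + ε) - (α - ε) ≤ 4ε`.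
  have key : ∀ ε : ℝ, 0 < ε → ε ≤ 1 → α - (1 + 4 * vol d k) * ε ≤ upperDensity d T := by
    intro ε hε hε1
    apply le_upperDensity_of_frequently
    have e1 := (tendsto_add_atTop_nat k).eventually
      (eventually_of_upperDensity_lt (show upperDensity d (A + cube d k) < α + ε by linarith))
    have e2 := eventually_vol_add_le d k hε
    have f1 := frequently_of_lt_upperDensity (show α - ε < upperDensity d A by linarith)
    refine (f1.and_eventually (e1.and e2)).mono ?_
    rintro n ⟨hn, hn1, hn2⟩
    set An := (boxF d n 0).filter (· ∈ A) with hAn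
    set Pn := (boxF d (n + k) 0).filter (· ∈ A + cube d k) with hPn
    have hsub : An ⊆ Pn := by
      intro a ha
      rw [hAn, Finset.mem_filter, mem_boxF] at ha
      rw [hPn, Finset.mem_filter, mem_boxF]
      refine ⟨fun i => ?_, a, ha.2, 0, by simp [mem_cube], by simp⟩
      have := ha.1 i
      push_cast
      constructor <;> linarith
    have hw : ∀ w ∈ boxF d k 0, (An.filter (fun z => z + w ∉ A)).card ≤ (Pn \ An).card := by
      intro w hw
      rw [← Finset.card_image_of_injective _ (add_left_injective w)]
      apply Finset.card_le_card
      intro y hy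
      obtain ⟨z, hz, rfl⟩ := Finset.mem_image.1 hy
      rw [hAn, Finset.mem_filter, Finset.mem_filter, mem_boxF] at hz
      rw [mem_boxF] at hw
      simp only [hPn, hAn, Finset.mem_sdiff, Finset.mem_filter, mem_boxF]
      refine ⟨⟨fun i => ?_, z, hz.1.2, w, ?_, rfl⟩, fun hh => hz.2 hh.2⟩
      · have := hz.1.1 i
        have := hw i
        simp only [Pi.zero_apply, Pi.add_apply] at *
        push_cast
        constructor <;> linarith
      · rw [mem_cube]
        intro i
        simpa using hw i
    have hcover : An ⊆ (boxF d n 0).filter (· ∈ T) ∪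
        (boxF d k 0).biUnion (fun w => An.filter (fun z => z + w ∉ A)) := by
      intro z hz
      rw [Finset.mem_union]
      by_cases hzT : z ∈ T
      · left
        exact Finset.mem_filter.2 ⟨(Finset.mem_filter.1 hz).1, hzT⟩
      · right
        rw [hT, Set.mem_ofPred_eq, Set.not_subset] at hzT
        obtain ⟨y, hy, hyA⟩ := hzT
        rw [mem_cubeAt] at hy
        refine Finset.mem_biUnion.2 ⟨y - z, ?_, Finset.mem_filter.2 ⟨hz, by simpa using hyA⟩⟩
        rw [mem_boxF]
        intro i
        have := hy i
        simp only [Pi.zero_apply, Pi.sub_apply]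
        constructor <;> linarith
    have hc : An.card ≤ cnt d T n 0 + (boxF d k 0).card * (Pn \ An).card :=
      (Finset.card_le_card hcover).trans ((Finset.card_union_le _ _).trans
        (Nat.add_le_add_left (Finset.card_biUnion_le_card_mul _ _ _ hw) _))
    have hc' : (An.card : ℝ) ≤ cnt d T n 0 + vol d k * ((Pn.card : ℝ) - An.card) := by
      rw [← card_boxF d k 0]
      have hsd : ((Pn \ An).card : ℝ) = (Pn.card : ℝ) - An.card := by
        rw [Finset.card_sdiff_of_subset hsub, Nat.cast_sub (Finset.card_le_card hsub)]
      rw [← hsd]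
      exact_mod_cast hc
    have hAc : (α - ε) * vol d n < An.card := hn
    have hPc : (Pn.card : ℝ) < (α + ε) * vol d (n + k) := hn1
    have hVn := vol_pos d n
    have hα0 : 0 ≤ α + ε := by
      by_contra hneg
      push Not at hneg
      nlinarith [vol_pos d (n + k), (Nat.cast_nonneg Pn.card : (0 : ℝ) ≤ _)]
    have h1 : (Pn.card : ℝ) - An.card ≤ 4 * ε * vol d n := by
      have h2 := mul_le_mul_of_nonneg_left hn2 hα0
      have h3 : (α + ε) * (1 + ε) - (α - ε) ≤ 4 * ε := by nlinarith
      nlinarith [mul_le_mul_of_nonneg_right h3 hVn.le]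
    have h4 := mul_le_mul_of_nonneg_left h1 hvk.le
    nlinarith
  have hC : 0 < 1 + 4 * vol d k := by positivity
  refine le_of_forall_pos_lt_add fun δ hδ => ?_
  have hmin : 0 < min 1 (δ / (2 * (1 + 4 * vol d k))) := lt_min one_pos (by positivity)
  have h1 := key _ hmin (min_le_left _ _)
  have h2 : (1 + 4 * vol d k) * min 1 (δ / (2 * (1 + 4 * vol d k))) ≤ δ / 2 := by
    refine (mul_le_mul_of_nonneg_left (min_le_right _ _) hC.le).trans (le_of_eq ?_)
    field_simp
  linarith

/-! ### Combining the two cases -/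

lemma upperDensity_mono {d : ℕ} {A B : Set (Fin d → ℤ)} (h : A ⊆ B) :
    upperDensity d A ≤ upperDensity d B := by
  refine le_of_forall_lt fun c hc => ?_
  obtain ⟨c', hc', hc''⟩ := exists_between hc
  refine hc'.trans_le (le_upperDensity_of_frequently
    ((frequently_of_lt_upperDensity hc'').mono fun n hn => hn.le.trans ?_))
  exact_mod_cast cnt_mono h subset_rfl

lemma nonempty_of_banachDensity_pos {d : ℕ} {B : Set (Fin d → ℤ)} (hB : 0 < banachDensity d B) :
    B.Nonempty := by
  by_contra hne
  rw [Set.not_nonempty_iff_eq_empty] at hne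
  subst hne
  simp [banachDensity] at hB

theorem stmt_0 (d : ℕ) (hd : 1 ≤ d) (A B : Set (Fin d → ℤ)) (α : ℝ)
    (hA : upperDensity d A = α) (hα : 0 < α) (hB : 0 < banachDensity d B) :
    ∃ m : ℕ, ∀ k : ℕ,
      α ≤ upperDensity d {z : Fin d → ℤ | cubeAt d k z ⊆ A + B + cube d m} := by
  subst hA
  by_cases h : ∀ r, upperDensity d (A + cube d r) ≤ upperDensity d A
  · obtain ⟨b, hb⟩ := nonempty_of_banachDensity_pos hB
    -- `m` is chosen so that the cube contains `-b`; then `A ⊆ A + B + cube d m`.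
    refine ⟨∑ i, (b i).natAbs, fun k => (le_upperDensity_of_invariant k (h k)).trans
      (upperDensity_mono fun z hz =>
        Set.Subset.trans (show cubeAt d k z ⊆ A from hz) fun a ha => ?_)⟩
    refine ⟨a + b, ⟨a, ha, b, hb, rfl⟩, -b, ?_, by simp⟩
    rw [mem_cube]
    intro i
    have h1 : (b i).natAbs ≤ ∑ i, (b i).natAbs := Finset.single_le_sum
      (f := fun i => (b i).natAbs) (fun _ _ => Nat.zero_le _) (Finset.mem_univ i)
    rw [Pi.neg_apply]
    omega
  · push Not at h
    obtain ⟨r, hr⟩ := h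
    have h0 := upperDensity_le_one d (A + cube d r)
    set η := (upperDensity d (A + cube d r) - upperDensity d A) / 8 with hη
    have hη0 : 0 < η := by linarith
    have hη1 : η ≤ 1 := by linarith
    obtain ⟨m, hm⟩ := exists_fat hB hη0 hη1
    refine ⟨r + m, fun k => ?_⟩
    have h1 := le_upperDensity_of_fat (A := A + cube d r) hη0 hm k
    have h2 : upperDensity d A = upperDensity d (A + cube d r) - 8 * η := by rw [hη]; ring
    refine (h2.le.trans h1).trans (upperDensity_mono fun z hz =>
      Set.Subset.trans (show cubeAt d k z ⊆ A + cube d r + (B + cube d m) from hz) ?_)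
    rintro _ ⟨_, ⟨a, ha, c, hc, rfl⟩, _, ⟨b, hb, e, he, rfl⟩, rfl⟩
    refine ⟨a + b, ⟨a, ha, b, hb, rfl⟩, c + e, ?_, by simp only []; abel⟩
    rw [mem_cube] at *
    intro i
    have := hc i
    have := he i
    rw [Pi.add_apply]
    push_cast
    constructor <;> linarith
end

section
/- Let A and B be subsets of ℕ such that the lower density of A equals α > 0 and the lower density of B equals β > 0. Then A + B is strongly upper syndetic of level min{α + β, 1}; that is, for every infinite set S ⊆ ℕ there exists m ∈ ℕ such that for every k ∈ ℕ, limsup_{n∈S} (1/n)·|{z ∈ [1,n] : [z−k, z+k] ⊆ A + B + [-m,m]}| ≥ min{α + β, 1}. -/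
/-!
Let `A^m = A + [0, m]`, and let `X` be the set of those `a ∈ A` for which `A^m` fills at least three
quarters of the window `(a, a + K]`; define `Y ⊆ B` in the same way. By pigeonhole, for `x ∈ X` and
`y ∈ Y` the set `A^m + B^m` contains an interval of length about `K / 2` in the middle of
`x + y + [0, 2 K]` (`window_sum`), so up to the bounded translation by `K` every element of
`X + Y + [0, R]` is a witness (`thickSum_translate`). It remains to bound `|X + Y + [0, R]|` from
below. Mann's theorem (`mann`, proved by Dyson's transform) gives density `α + β` for sumsets of
sets satisfying `|X ∩ [1, x]| ≥ α x` and `|Y ∩ [1, x]| ≥ β x` for all `x`; the form used here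
(`sumset_count`) tolerates an error `δ N` in these bounds at the cost of an error `ε N`. The elements
thrown away in passing from `A` to `X` are few when `A^K` has hardly more elements than `A^m`, since
each of them forces a quarter of a window to be filled up (`cnt_sparse_le`).

To have one `m` for all `k`, and the exact value `min (α + β) 1` rather than `min (α + β) 1 - ε`,
densities are taken along an ultrafilter `U` finer than `atTop ⊓ 𝓟 S`. Let `α + β < 1`.

* If some `A^l` (or `B^l`) has density greater than `α` (or `β`) along `U`, the excess on `[1, N]`
  carries over to the sumset (`sumset_count_excess`). The densities of `A^m` increase to a limit, so
  for large `m` passing to any larger `K` costs less than this excess (`case_excess`).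
* Otherwise `A^K` and `A` have the same density along `U` for all `K`, and `m = 0` works, with an
  arbitrarily small error for each `k` (`case_saturated`).

If `α + β ≥ 1`, one may assume equality. For a number `x` outside `A + B + [0, 1]` the sets
`A^1` and `x - B` are disjoint, so `A^1`, and then `A^K`, hardly exceeds `A` on `[1, x]`; the same
holds for `B`. So almost all elements up to the largest such `x ≤ N` are witnesses,
and beyond it all are, which shows that `m = 1` works (`case_full`).
-/

open Filter

/-- Lower asymptotic density of a set of (positive) natural numbers,
computed on the initial segments `[1, n]`. -/
noncomputable def lowerDensityNat (A : Set ℕ) : ℝ :=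
  liminf (fun n : ℕ => (Set.ncard (A ∩ Set.Icc 1 n) : ℝ) / n) atTop

/-- The set `A + B + [-m, m]`, viewed inside `ℤ`. -/
def sumsetPlusInterval (A B : Set ℕ) (m : ℕ) : Set ℤ :=
  {w : ℤ | ∃ a ∈ A, ∃ b ∈ B, ∃ t : ℤ, |t| ≤ (m : ℤ) ∧ w = (a : ℤ) + (b : ℤ) + t}

namespace SumsetSyndetic

/-! ### Counting functions -/

/-- The counting function `|A ∩ [1, n]|`. -/
noncomputable def cnt (A : Set ℕ) (n : ℕ) : ℕ := (A ∩ Set.Icc 1 n).ncard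

/-- The translate `A - x`, cut down to the natural numbers. -/
def shift (x : ℕ) (A : Set ℕ) : Set ℕ := {i | x + i ∈ A}

lemma finite_inter (A : Set ℕ) (n : ℕ) : (A ∩ Set.Icc 1 n).Finite :=
  (Set.finite_Icc 1 n).inter_of_right A

@[simp] lemma cnt_zero (A : Set ℕ) : cnt A 0 = 0 := by simp [cnt]

lemma cnt_succ_of_mem {A : Set ℕ} {n : ℕ} (h : n + 1 ∈ A) : cnt A (n + 1) = cnt A n + 1 := by
  have : A ∩ Set.Icc 1 (n + 1) = insert (n + 1) (A ∩ Set.Icc 1 n) := by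
    ext i
    simp only [Set.mem_inter_iff, Set.mem_Icc, Set.mem_insert_iff]
    constructor
    · rintro ⟨h1, h2, h3⟩
      rcases Nat.lt_or_ge n i with h4 | h4
      · left; omega
      · right; exact ⟨h1, h2, h4⟩
    · rintro (rfl | ⟨h1, h2, h3⟩)
      · exact ⟨h, by omega, le_rfl⟩
      · exact ⟨h1, h2, by omega⟩
  rw [cnt, this, Set.ncard_insert_of_notMem (by simp) (finite_inter A n), cnt]

lemma cnt_succ_of_notMem {A : Set ℕ} {n : ℕ} (h : n + 1 ∉ A) : cnt A (n + 1) = cnt A n := by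
  have : A ∩ Set.Icc 1 (n + 1) = A ∩ Set.Icc 1 n := by
    ext i
    simp only [Set.mem_inter_iff, Set.mem_Icc]
    constructor
    · rintro ⟨h1, h2, h3⟩
      refine ⟨h1, h2, ?_⟩
      rcases Nat.lt_or_ge n i with h4 | h4
      · exact absurd (by rwa [show n + 1 = i by omega]) h
      · exact h4
    · rintro ⟨h1, h2, h3⟩
      exact ⟨h1, h2, by omega⟩
  rw [cnt, this, cnt]

lemma cnt_le_succ (A : Set ℕ) (n : ℕ) : cnt A n ≤ cnt A (n + 1) := by
  by_cases h : n + 1 ∈ A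
  · rw [cnt_succ_of_mem h]; omega
  · rw [cnt_succ_of_notMem h]

lemma cnt_succ_le (A : Set ℕ) (n : ℕ) : cnt A (n + 1) ≤ cnt A n + 1 := by
  by_cases h : n + 1 ∈ A
  · rw [cnt_succ_of_mem h]
  · rw [cnt_succ_of_notMem h]; omega

lemma cnt_mono (A : Set ℕ) {m n : ℕ} (h : m ≤ n) : cnt A m ≤ cnt A n :=
  monotone_nat_of_le_succ (cnt_le_succ A) h

lemma cnt_le (A : Set ℕ) (n : ℕ) : cnt A n ≤ n := by
  induction n with
  | zero => simp
  | succ n ih => have := cnt_succ_le A n; omega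

lemma cnt_add (A : Set ℕ) (x y : ℕ) : cnt A (x + y) = cnt A x + cnt (shift x A) y := by
  induction y with
  | zero => simp
  | succ y ih =>
    by_cases h : x + y + 1 ∈ A
    · have h' : y + 1 ∈ shift x A := h
      rw [← add_assoc, cnt_succ_of_mem h, cnt_succ_of_mem h', ih]; ring
    · have h' : y + 1 ∉ shift x A := h
      rw [← add_assoc, cnt_succ_of_notMem h, cnt_succ_of_notMem h', ih]

lemma cnt_add_le (A : Set ℕ) (x y : ℕ) : cnt A (x + y) ≤ cnt A x + y := by
  rw [cnt_add]; have := cnt_le (shift x A) y; omega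

lemma cnt_subset {A B : Set ℕ} {n : ℕ} (h : ∀ i, 1 ≤ i → i ≤ n → i ∈ A → i ∈ B) :
    cnt A n ≤ cnt B n :=
  Set.ncard_le_ncard (fun i hi => ⟨h i hi.2.1 hi.2.2 hi.1, hi.2⟩) (finite_inter B n)

lemma cnt_eq_of_forall_mem {A : Set ℕ} {n : ℕ} (h : ∀ i, 1 ≤ i → i ≤ n → i ∈ A) :
    cnt A n = n := by
  have : A ∩ Set.Icc 1 n = Set.Icc 1 n :=
    Set.inter_eq_right.2 fun i hi => h i hi.1 hi.2
  rw [cnt, this, ← Finset.coe_Icc, Set.ncard_coe_finset]; simp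

lemma cnt_union_le (A B : Set ℕ) (n : ℕ) : cnt (A ∪ B) n ≤ cnt A n + cnt B n := by
  rw [cnt, Set.union_inter_distrib_right]; exact Set.ncard_union_le _ _

lemma cnt_union_eq {A B : Set ℕ} (h : Disjoint A B) (n : ℕ) :
    cnt (A ∪ B) n = cnt A n + cnt B n := by
  rw [cnt, Set.union_inter_distrib_right]
  exact Set.ncard_union_eq (h.mono Set.inter_subset_left Set.inter_subset_left)
    (finite_inter A n) (finite_inter B n)

lemma cnt_diff {A B : Set ℕ} (h : B ⊆ A) (n : ℕ) : cnt (A \ B) n + cnt B n = cnt A n := by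
  rw [← cnt_union_eq Set.disjoint_sdiff_left, Set.sdiff_union_of_subset h]

/-- Any translate of a set by `p` loses at most the part pushed beyond `n`. -/
lemma cnt_le_of_translate {A B : Set ℕ} {p k n : ℕ} (hn : p + k ≤ n)
    (h : ∀ i, 1 ≤ i → i ≤ k → i ∈ A → p + i ∈ B) : cnt A k + cnt B p ≤ cnt B n := by
  have h1 := cnt_mono B hn
  rw [cnt_add] at h1
  have h2 : cnt A k ≤ cnt (shift p B) k := cnt_subset h
  omega

/-! ### The theorem of Mann -/

/-- If translating by `B` keeps the part of `A` below `e` inside `A`, then `A` alone carries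
the density that is assumed of the pair `A`, `B`. -/
lemma stable_density {A B : Set ℕ} {n e : ℕ} {γ : ℝ} (hγ : γ ≤ 1) (hA0 : 0 ∈ A)
    (hst : ∀ a ∈ A, a < e → ∀ b ∈ B, a + b ≤ n → a + b ∈ A)
    (hAB : ∀ i, i ≤ n → γ * i ≤ cnt A i + cnt B i) :
    ∀ i, i < e → i ≤ n → γ * i ≤ cnt A i := by
  intro i
  induction i using Nat.strong_induction_on with
  | _ i ih =>
    intro hie hin
    by_cases hB : ∃ b, 1 ≤ b ∧ b ∈ B
    · classical
      have hspec := Nat.find_spec hB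
      have hmin : ∀ j, j < Nat.find hB → ¬ (1 ≤ j ∧ j ∈ B) := fun j hj => Nat.find_min hB hj
      generalize Nat.find hB = b at hspec hmin
      obtain ⟨hb1, hbB⟩ := hspec
      have hB0 : ∀ j, j < b → cnt B j = 0 := by
        intro j hj
        have : cnt B j ≤ cnt (∅ : Set ℕ) j :=
          cnt_subset fun l h1 h2 h3 => hmin l (by omega) ⟨h1, h3⟩
        simpa [cnt] using this
      rcases Nat.lt_or_ge i b with hib | hib
      · have := hAB i hin
        rw [hB0 i hib] at this
        simpa using this
      · have h1 := hAB (b - 1) (by omega)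
        rw [hB0 (b - 1) (by omega)] at h1
        have h2 := ih (i - b) (by omega) (by omega) (by omega)
        have hbA : b ∈ A := by simpa using hst 0 hA0 (by omega) b hbB (by omega)
        have h3 : cnt A b = cnt A (b - 1) + 1 := by
          have := cnt_succ_of_mem (A := A) (n := b - 1) (by rwa [Nat.sub_add_cancel hb1])
          rwa [Nat.sub_add_cancel hb1] at this
        have h4 : cnt A (i - b) + cnt A b ≤ cnt A i :=
          cnt_le_of_translate (by omega) fun j hj1 hj2 hjA => by
            rw [add_comm]; exact hst j hjA (by omega) b hbB (by omega)
        have h5 : ((cnt A (i - b) + (cnt A (b - 1) + 1) : ℕ) : ℝ) ≤ cnt A i := by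
          rw [← h3]; exact_mod_cast h4
        push_cast [Nat.cast_sub hib, Nat.cast_sub hb1] at h1 h2 h5
        linarith
    · have h0 : cnt B i = 0 := by
        have : cnt B i ≤ cnt (∅ : Set ℕ) i :=
          cnt_subset fun l h1 h2 h3 => hB ⟨l, h1, h3⟩
        simpa [cnt] using this
      have := hAB i hin
      rw [h0] at this
      simpa using this

/-- Mann's theorem on `[1, n]`, by Dyson's transform: elements of `B` are moved into `A`, without
enlarging the sumset and without spoiling the joint density bound, until `A` is stable under
adding elements of `B`. -/
theorem mann {γ : ℝ} (hγ : γ ≤ 1) (n : ℕ) (C : Set ℕ) : ∀ (N : ℕ) (A B : Set ℕ), cnt B n ≤ N →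
    0 ∈ A → 0 ∈ B → (∀ a ∈ A, ∀ b ∈ B, a + b ≤ n → a + b ∈ C) →
    (∀ i, i ≤ n → γ * i ≤ cnt A i + cnt B i) → γ * n ≤ cnt C n := by
  intro N
  induction N with
  | zero =>
    intro A B hN hA0 hB0 hC hAB
    have h1 := hAB n le_rfl
    have h2 : cnt A n ≤ cnt C n := cnt_subset fun i _ hi hA => by
      simpa using hC i hA 0 hB0 (by simpa using hi)
    have h3 : (cnt A n : ℝ) ≤ cnt C n := by exact_mod_cast h2
    have h4 : cnt B n = 0 := by omega
    rw [h4] at h1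
    push_cast at h1
    linarith
  | succ N ih =>
    intro A B hN hA0 hB0 hC hAB
    by_cases hex : ∃ e, e ∈ A ∧ ∃ b ∈ B, e + b ≤ n ∧ e + b ∉ A
    · classical
      have hspec := Nat.find_spec hex
      have hmin : ∀ j, j < Nat.find hex → ¬ (j ∈ A ∧ ∃ b ∈ B, j + b ≤ n ∧ j + b ∉ A) :=
        fun j hj => Nat.find_min hex hj
      generalize Nat.find hex = e at hspec hmin
      obtain ⟨heA, b₀, hb₀B, hb₀n, hb₀A⟩ := hspec
      have hst : ∀ a ∈ A, a < e → ∀ b ∈ B, a + b ≤ n → a + b ∈ A := by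
        intro a ha hae b hb hab
        by_contra h
        exact hmin a hae ⟨ha, b, hb, hab, h⟩
      have hdens := stable_density hγ hA0 hst hAB
      set B₁ : Set ℕ := {b | b ∈ B ∧ e + b ≤ n ∧ e + b ∉ A} with hB₁
      set D : Set ℕ := {x | ∃ b ∈ B₁, x = e + b} with hD
      have hB₁B : B₁ ⊆ B := fun b hb => hb.1
      have hdisj : Disjoint A D := by
        rw [Set.disjoint_left]
        rintro x hx ⟨b, hb, rfl⟩
        exact hb.2.2 hx
      refine ih (A ∪ D) (B \ B₁) ?_ (Or.inl hA0) ⟨hB0, fun h => h.2.2 (by simpa using heA)⟩ ?_ ?_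
      · have h1 := cnt_diff hB₁B n
        have hpos : 1 ≤ b₀ := by
          rcases Nat.eq_zero_or_pos b₀ with h | h
          · subst h; exact absurd (by simpa using heA) hb₀A
          · exact h
        have h2 : 0 < cnt B₁ n :=
          (Set.ncard_pos (finite_inter B₁ n)).2
            ⟨b₀, ⟨hb₀B, hb₀n, hb₀A⟩, hpos, by omega⟩
        omega
      · rintro a (ha | ⟨b₁, hb₁, rfl⟩) b ⟨hb, hbn⟩ hab
        · exact hC a ha b hb hab
        · have : e + b ∈ A := by
            by_contra h
            exact hbn ⟨hb, by omega, h⟩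
          have := hC (e + b) this b₁ hb₁.1 (by omega)
          rwa [show e + b₁ + b = e + b + b₁ by ring]
      · intro m hm
        have h1 := cnt_diff hB₁B m
        have h2 := cnt_union_eq hdisj m
        have h3 : cnt B₁ (m - e) ≤ cnt D m := by
          rcases Nat.lt_or_ge m e with h | h
          · rw [Nat.sub_eq_zero_of_le h.le]; simp
          · have : cnt B₁ (m - e) + cnt D e ≤ cnt D m :=
              cnt_le_of_translate (by omega) fun i _ _ hi => ⟨i, hi, rfl⟩
            omega
        by_cases hw : ∃ b, b ∈ B₁ ∧ m - e < b ∧ b ≤ m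
        · -- The smallest element `b` of `B₁` in `(m - e, m]` is where the removed elements begin.
          have hspec := Nat.find_spec hw
          have hmin' : ∀ j, j < Nat.find hw → ¬ (j ∈ B₁ ∧ m - e < j ∧ j ≤ m) :=
            fun j hj => Nat.find_min hw hj
          generalize Nat.find hw = b at hspec hmin'
          obtain ⟨hbB₁, hbl, hbm⟩ := hspec
          have hb1 : 1 ≤ b := by omega
          have hbA : b ∈ A := by
            simpa using hst 0 hA0 (by omega) b hbB₁.1 (by omega)
          have h4 : cnt A b = cnt A (b - 1) + 1 := by
            have := cnt_succ_of_mem (A := A) (n := b - 1) (by rwa [Nat.sub_add_cancel hb1])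
            rwa [Nat.sub_add_cancel hb1] at this
          have h5 : cnt A (m - b) + cnt A b ≤ cnt A m :=
            cnt_le_of_translate (by omega) fun j hj1 hj2 hjA => by
              rw [add_comm]; exact hst j hjA (by omega) b hbB₁.1 (by omega)
          have h6 := hdens (m - b) (by omega) (by omega)
          have h7 := hAB (b - 1) (by omega)
          have h8 : cnt B₁ (b - 1) ≤ cnt B₁ (m - e) := by
            have hle : m - e ≤ b - 1 := by omega
            have e1 := cnt_add B₁ (m - e) (b - 1 - (m - e))
            rw [Nat.add_sub_cancel' hle] at e1
            have e2 : cnt (shift (m - e) B₁) (b - 1 - (m - e)) ≤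
                cnt (∅ : Set ℕ) (b - 1 - (m - e)) :=
              cnt_subset fun l l1 l2 l3 =>
                hmin' (m - e + l) (by omega) ⟨l3, by omega, by omega⟩
            have e3 : cnt (∅ : Set ℕ) (b - 1 - (m - e)) = 0 := by simp [cnt]
            omega
          have h9 := cnt_diff hB₁B (b - 1)
          have h10 : cnt (B \ B₁) (b - 1) ≤ cnt (B \ B₁) m := cnt_mono _ (by omega)
          have h11 : ((cnt A (m - b) + cnt A (b - 1) + cnt B (b - 1) + 1 : ℕ) : ℝ) ≤
              ((cnt (A ∪ D) m + cnt (B \ B₁) m : ℕ) : ℝ) := by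
            exact_mod_cast (by omega)
          push_cast [Nat.cast_sub hbm, Nat.cast_sub hb1] at h6 h7 h11
          linarith
        · have h4 : cnt B₁ m ≤ cnt B₁ (m - e) := by
            have hle : m - e ≤ m := by omega
            have e1 := cnt_add B₁ (m - e) (m - (m - e))
            rw [Nat.add_sub_cancel' hle] at e1
            have e2 : cnt (shift (m - e) B₁) (m - (m - e)) ≤
                cnt (∅ : Set ℕ) (m - (m - e)) :=
              cnt_subset fun l l1 l2 l3 => hw ⟨m - e + l, l3, by omega, by omega⟩
            have e3 : cnt (∅ : Set ℕ) (m - (m - e)) = 0 := by simp [cnt]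
            omega
          have h5 : ((cnt A m + cnt B m : ℕ) : ℝ) ≤
              ((cnt (A ∪ D) m + cnt (B \ B₁) m : ℕ) : ℝ) := by
            exact_mod_cast (by omega)
          have h6 := hAB m hm
          push_cast at h5
          linarith
    · push Not at hex
      have h1 := stable_density (e := n + 1) hγ hA0
        (fun a ha _ b hb hab => hex a ha b hb hab) hAB n (by omega) le_rfl
      have h2 : cnt A n ≤ cnt C n := cnt_subset fun i _ hi hA => by
        simpa using hC i hA 0 hB0 (by simpa using hi)
      have h3 : (cnt A n : ℝ) ≤ cnt C n := by exact_mod_cast h2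
      linarith

/-! ### Sumsets of sets with approximate lower density -/

/-- The thickened sumset `X + Y + [0, R]`. -/
def thickSum (R : ℕ) (X Y : Set ℕ) : Set ℕ := {c | ∃ x ∈ X, ∃ y ∈ Y, ∃ r ≤ R, c = x + y + r}

lemma thickSum_mono {R R' : ℕ} (h : R ≤ R') (X Y : Set ℕ) : thickSum R X Y ⊆ thickSum R' X Y := by
  rintro c ⟨x, hx, y, hy, r, hr, rfl⟩
  exact ⟨x, hx, y, hy, r, hr.trans h, rfl⟩

/-- Choosing a minimum of `x ↦ |X ∩ [1, x]| - a x` gives a starting point past which `X` has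
density at least `a` on every initial segment. -/
lemma exists_start (X : Set ℕ) (a : ℝ) (n : ℕ) :
    ∃ p ≤ n, (cnt X p : ℝ) ≤ a * p ∧ ∀ x, p + x ≤ n → a * x ≤ cnt (shift p X) x := by
  obtain ⟨p, hp, hmin⟩ := Finset.exists_min_image (Finset.range (n + 1))
    (fun x : ℕ => (cnt X x : ℝ) - a * x) ⟨0, by simp⟩
  rw [Finset.mem_range] at hp
  refine ⟨p, by omega, ?_, fun x hx => ?_⟩
  · have := hmin 0 (by simp)
    simp at this
    linarith
  · have h1 := hmin (p + x) (by rw [Finset.mem_range]; omega)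
    have h2 := cnt_add X p x
    have h3 : (cnt X (p + x) : ℝ) = cnt X p + cnt (shift p X) x := by exact_mod_cast h2
    push_cast at h1
    linarith

/-- Thickening by `[0, R]` repairs the loss of the starting point, which Mann's theorem
does not count: this costs only `1 / R` in density. -/
lemma thicken_density {Z : Set ℕ} {a : ℝ} {n R : ℕ} (ha : 0 < a) (ha1 : a ≤ 1) (hR : 1 ≤ R)
    (hn : 1 ≤ n) (h : ∀ x, x ≤ n → a * x ≤ cnt Z x) :
    (0 : ℕ) ∈ {i | ∃ z ∈ Z, ∃ r ≤ R, z + r = i + 1} ∧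
    ∀ i, i + 1 ≤ n → (a - 1 / R) * i ≤ cnt {i | ∃ z ∈ Z, ∃ r ≤ R, z + r = i + 1} i := by
  have h1 : 1 ∈ Z := by
    by_contra h0
    have := h 1 hn
    rw [show (1 : ℕ) = 0 + 1 from rfl, cnt_succ_of_notMem h0] at this
    simp at this
    linarith
  have hR' : (0 : ℝ) < R := by exact_mod_cast hR
  refine ⟨⟨1, h1, 0, by omega, rfl⟩, fun i hi => ?_⟩
  have hR0 : (0 : ℝ) ≤ 1 / R * i := by positivity
  rcases le_or_gt i R with hiR | hiR
  · rw [cnt_eq_of_forall_mem (A := {i | ∃ z ∈ Z, ∃ r ≤ R, z + r = i + 1}) (n := i)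
      fun j _ hj => ⟨1, h1, j, by omega, by omega⟩]
    have : a * i ≤ 1 * i := by gcongr
    linarith
  · have h2 := h (i + 1) hi
    have h3 := cnt_add Z 1 i
    have h4 := cnt_le Z 1
    have h5 : cnt (shift 1 Z) i ≤ cnt {i | ∃ z ∈ Z, ∃ r ≤ R, z + r = i + 1} i :=
      cnt_subset fun j _ _ hj => ⟨1 + j, hj, 0, by omega, by omega⟩
    have h6 : (cnt Z (i + 1) : ℝ) ≤ 1 + cnt {i | ∃ z ∈ Z, ∃ r ≤ R, z + r = i + 1} i := by
      rw [add_comm i 1]; exact_mod_cast (by omega)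
    have h7 : 1 ≤ 1 / (R : ℝ) * i := by
      rw [one_div, inv_mul_eq_div, le_div_iff₀ hR']
      have : (R : ℝ) ≤ i := by exact_mod_cast hiR.le
      linarith
    push_cast at h2
    linarith

/-- Approximate form of Mann's theorem: lower bounds `a` and `b` for the densities, valid up to an
error `δ N` only, give `a + b` for the slightly thickened sumset, up to an error `ε N`. -/
lemma sumset_count {a b ε : ℝ} (ha : 0 < a) (hb : 0 < b) (hab : a + b ≤ 1) (hε : 0 < ε) :
    ∃ δ > 0, ∃ R N₀ : ℕ, ∀ N n : ℕ, N₀ ≤ N → n ≤ N → ∀ X Y : Set ℕ,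
      (∀ x ≤ n, a * x - δ * N ≤ cnt X x) → (∀ x ≤ n, b * x - δ * N ≤ cnt Y x) →
      (a + b) * n - ε * N ≤ cnt (thickSum R X Y) n := by
  obtain ⟨η, hη, hηa, hηb, hηε⟩ : ∃ η > 0, η < a ∧ η < b ∧ η ≤ ε / 8 :=
    ⟨min (min (a / 2) (b / 2)) (ε / 8), by positivity,
      ((min_le_left _ _).trans (min_le_left _ _)).trans_lt (by linarith),
      ((min_le_left _ _).trans (min_le_right _ _)).trans_lt (by linarith), min_le_right _ _⟩
  obtain ⟨R, hR⟩ := exists_nat_gt (8 / ε)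
  have hR0 : (0 : ℝ) < R := lt_trans (by positivity) hR
  have hR1 : 1 ≤ R := by exact_mod_cast hR0
  have hRε : 1 / (R : ℝ) ≤ ε / 8 := by
    rw [div_lt_iff₀ hε] at hR
    rw [div_le_iff₀ hR0]; linarith
  obtain ⟨N₀, hN₀⟩ := exists_nat_gt (8 / ε)
  refine ⟨η * ε / 8, by positivity, R + R, N₀, fun N n hN hnN X Y hX hY => ?_⟩
  have hNε : 2 ≤ ε / 4 * N := by
    have h1 : (N₀ : ℝ) ≤ N := by exact_mod_cast hN
    rw [div_lt_iff₀ hε] at hN₀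
    nlinarith
  have hnN' : (n : ℝ) ≤ N := by exact_mod_cast hnN
  obtain ⟨p, hpn, hp1, hp2⟩ := exists_start X (a - η) n
  obtain ⟨q, hqn, hq1, hq2⟩ := exists_start Y (b - η) n
  have hpb : (p : ℝ) ≤ ε / 8 * N := by
    have := hX p hpn
    have h : η * p ≤ η * (ε / 8 * N) := by linarith
    exact le_of_mul_le_mul_left h hη
  have hqb : (q : ℝ) ≤ ε / 8 * N := by
    have := hY q hqn
    have h : η * q ≤ η * (ε / 8 * N) := by linarith
    exact le_of_mul_le_mul_left h hη
  have hεN : 0 ≤ ε * N := by positivity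
  have habn : (a + b) * n ≤ 1 * n := by gcongr
  rcases lt_or_ge n (p + q + 2) with hlt | hge
  · have h1 : (n : ℝ) ≤ p + q + 2 := by exact_mod_cast hlt.le
    have h2 : (0 : ℝ) ≤ cnt (thickSum (R + R) X Y) n := by positivity
    linarith
  · obtain ⟨l, rfl⟩ := Nat.exists_eq_add_of_le hge
    obtain ⟨hX0, hX'⟩ := thicken_density (n := l + 1) (R := R) (by linarith) (by linarith) hR1
      (by omega) (fun x hx => hp2 x (by omega))
    obtain ⟨hY0, hY'⟩ := thicken_density (n := l + 1) (R := R) (by linarith) (by linarith) hR1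
      (by omega) (fun x hx => hq2 x (by omega))
    have hR0' : 0 ≤ 1 / (R : ℝ) := by positivity
    have hm := mann (γ := (a - η - 1 / R) + (b - η - 1 / R)) (by linarith) l
      (shift (p + q + 2) (thickSum (R + R) X Y)) _ _ _ le_rfl hX0 hY0
      (by
        rintro i ⟨z, hz, r, hr, hzr⟩ j ⟨w, hw, s, hs, hws⟩ _
        refine ⟨p + z, hz, q + w, hw, r + s, by omega, by omega⟩)
      (fun i hi => by
        have h1 := hX' i (by omega)
        have h2 := hY' i (by omega)
        linarith)
    have h3 : cnt (shift (p + q + 2) (thickSum (R + R) X Y)) l ≤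
        cnt (thickSum (R + R) X Y) (p + q + 2 + l) := by
      rw [cnt_add]; omega
    have h3' : (cnt (shift (p + q + 2) (thickSum (R + R) X Y)) l : ℝ) ≤
        cnt (thickSum (R + R) X Y) (p + q + 2 + l) := by exact_mod_cast h3
    push_cast at hnN' ⊢
    have hl : (l : ℝ) ≤ N := by
      have : (0 : ℝ) ≤ p := by positivity
      have : (0 : ℝ) ≤ q := by positivity
      linarith
    have h4 : (2 * η + 2 * (1 / R)) * l ≤ (ε / 2) * N := by gcongr; linarith
    have h5 : (a + b) * (p + q + 2) ≤ 1 * (p + q + 2) := by gcongr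
    linarith

/-- Stability of the approximate Mann theorem: if `X` has excess density `η` on the single
segment `[1, N]`, then so, to a smaller extent, has the sumset. The excess is found by cutting
`[1, N]` at a minimum of `x ↦ |X ∩ [1, x]| - (a + η / 2) x`, beyond which `X` has density at least
`a + η / 2` on initial segments. -/
lemma sumset_count_excess {a b η : ℝ} (ha : 0 < a) (hb : 0 < b) (hη : 0 < η)
    (hab : a + b + η ≤ 1) :
    ∃ δ > 0, ∃ R N₀ : ℕ, ∃ κ > 0, ∀ N : ℕ, N₀ ≤ N → ∀ X Y : Set ℕ,
      (∀ x ≤ N, a * x - δ * N ≤ cnt X x) → (∀ x ≤ N, b * x - δ * N ≤ cnt Y x) →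
      (a + η) * N ≤ cnt X N →
      (a + b + κ) * N ≤ cnt (thickSum R X Y) N := by
  have hε : 0 < η ^ 2 / 16 := by positivity
  obtain ⟨δ₁, hδ₁, R₁, N₁, h₁⟩ := sumset_count ha hb (by linarith) hε
  obtain ⟨δ₂, hδ₂, R₂, N₂, h₂⟩ :=
    sumset_count (a := a + η / 2) (by linarith) hb (by linarith) hε
  refine ⟨min δ₁ δ₂, by positivity, max R₁ R₂, max N₁ N₂, η ^ 2 / 8, by positivity,
    fun N hN X Y hX hY hXN => ?_⟩
  have hm1 : min δ₁ δ₂ * N ≤ δ₁ * N := by gcongr; exact min_le_left _ _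
  have hm2 : min δ₁ δ₂ * N ≤ δ₂ * N := by gcongr; exact min_le_right _ _
  obtain ⟨y, hyN, hy1, hy2⟩ := exists_start X (a + η / 2) N
  obtain ⟨l, rfl⟩ := Nat.exists_eq_add_of_le hyN
  have e1 := h₁ (y + l) y ((le_max_left _ _).trans hN) hyN X Y
    (fun x hx => by have := hX x (by omega); linarith)
    (fun x hx => by have := hY x (by omega); linarith)
  have e2 := h₂ (y + l) l ((le_max_right _ _).trans hN) (by omega) (shift y X) Y
    (fun x hx => by
      have := hy2 x (by omega)
      have : 0 ≤ δ₂ * ((y + l : ℕ) : ℝ) := by positivity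
      linarith)
    (fun x hx => by have := hY x (by omega); linarith)
  have e3 : cnt (thickSum R₁ X Y) y ≤ cnt (thickSum (max R₁ R₂) X Y) y :=
    cnt_subset fun i _ _ hi => thickSum_mono (le_max_left _ _) X Y hi
  have e4 : cnt (thickSum R₂ (shift y X) Y) l ≤
      cnt (shift y (thickSum (max R₁ R₂) X Y)) l := by
    refine cnt_subset fun i _ _ hi => ?_
    obtain ⟨x, hx, w, hw, r, hr, rfl⟩ := hi
    exact ⟨y + x, hx, w, hw, r, hr.trans (le_max_right _ _), by omega⟩
  have e5 := cnt_add (thickSum (max R₁ R₂) X Y) y l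
  have e6 : ((cnt (thickSum R₁ X Y) y + cnt (thickSum R₂ (shift y X) Y) l : ℕ) : ℝ) ≤
      cnt (thickSum (max R₁ R₂) X Y) (y + l) := by exact_mod_cast (by omega)
  have e7 : (cnt X (y + l) : ℝ) ≤ cnt X y + l := by exact_mod_cast cnt_add_le X y l
  push_cast at *
  -- The part beyond the cut is long, because it has to carry the whole excess.
  have e8 : η / 2 * (y + l) ≤ l := by
    have h1 : (0 : ℝ) ≤ y := by positivity
    have h2 : (0 : ℝ) ≤ l := by positivity
    nlinarith
  have e9 : η / 2 * (η / 2 * (y + l)) ≤ η / 2 * l := by gcongr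
  nlinarith

/-! ### Fattened sets and windows -/

/-- The fattened set `A + [0, m]`. -/
def fat (m : ℕ) (A : Set ℕ) : Set ℕ := {x | ∃ a ∈ A, ∃ r ≤ m, x = a + r}

/-- The elements `a` of `A` for which `A + [0, m]` fills less than three quarters of the window
`(a, a + K]`. -/
def sparse (m K : ℕ) (A : Set ℕ) : Set ℕ := {a | a ∈ A ∧ 4 * cnt (shift a (fat m A)) K < 3 * K}

/-- The natural numbers `z` with `[z - k, z + k] ⊆ A + B + [-m, m]`. -/
def witnesses (A B : Set ℕ) (m k : ℕ) : Set ℕ :=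
  {z | Set.Icc ((z : ℤ) - k) ((z : ℤ) + k) ⊆ sumsetPlusInterval A B m}

lemma fat_mono {m K : ℕ} (h : m ≤ K) (A : Set ℕ) : fat m A ⊆ fat K A := by
  rintro x ⟨a, ha, r, hr, rfl⟩
  exact ⟨a, ha, r, hr.trans h, rfl⟩

lemma subset_fat (m : ℕ) (A : Set ℕ) : A ⊆ fat m A := fun a ha => ⟨a, ha, 0, by omega, rfl⟩

lemma fat_zero (A : Set ℕ) : fat 0 A = A := by
  refine Set.Subset.antisymm ?_ (subset_fat 0 A)
  rintro x ⟨a, ha, r, hr, rfl⟩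
  obtain rfl : r = 0 := by omega
  exact ha

lemma fat_fat (m l : ℕ) (A : Set ℕ) : fat m (fat l A) = fat (l + m) A := by
  ext x
  constructor
  · rintro ⟨_, ⟨a, ha, r, hr, rfl⟩, s, hs, rfl⟩
    exact ⟨a, ha, r + s, by omega, by omega⟩
  · rintro ⟨a, ha, r, hr, rfl⟩
    exact ⟨a + min r l, ⟨a, ha, min r l, by omega, rfl⟩, r - min r l, by omega, by omega⟩

lemma witnesses_comm (A B : Set ℕ) (m k : ℕ) : witnesses A B m k = witnesses B A m k := by
  have : sumsetPlusInterval A B m = sumsetPlusInterval B A m := by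
    ext w
    constructor <;>
    · rintro ⟨a, ha, b, hb, t, ht, rfl⟩
      exact ⟨b, hb, a, ha, t, ht, by ring⟩
  simp only [witnesses, this]

lemma witnesses_mono {m m' : ℕ} (h : m ≤ m') (A B : Set ℕ) (k : ℕ) :
    witnesses A B m k ⊆ witnesses A B m' k := by
  intro z hz w hw
  obtain ⟨a, ha, b, hb, t, ht, rfl⟩ := hz hw
  exact ⟨a, ha, b, hb, t, ht.trans (by exact_mod_cast h), rfl⟩

lemma witnesses_fat (A B : Set ℕ) (l m k : ℕ) :
    witnesses (fat l A) B m k ⊆ witnesses A B (m + l) k := by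
  intro z hz w hw
  obtain ⟨_, ⟨a, ha, r, hr, rfl⟩, b, hb, t, ht, rfl⟩ := hz hw
  refine ⟨a, ha, b, hb, t + r, ?_, by push_cast; ring⟩
  rw [abs_le] at ht ⊢
  push_cast
  omega

/-- Covering argument: if `D` fills a quarter of the window to the right of each
element of `E`, then `E` is at most eight times as large as `D`. -/
lemma window_cover {E D : Set ℕ} {K : ℕ} (hK : 1 ≤ K)
    (h : ∀ a ∈ E, K ≤ 4 * cnt (shift a D) K) (n : ℕ) : cnt E n ≤ 8 * cnt D (n + K) := by
  induction n using Nat.strong_induction_on with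
  | _ n ih =>
    rcases Nat.eq_zero_or_pos n with rfl | hn
    · simp
    obtain ⟨l, rfl⟩ : ∃ l, n = l + 1 := ⟨n - 1, by omega⟩
    by_cases hl : l + 1 ∈ E
    · have h1 := h _ hl
      have h2 := cnt_add D (l + 1) K
      rcases Nat.lt_or_ge l K with hlK | hlK
      · have := cnt_le E (l + 1)
        omega
      · have h3 := ih (l - K) (by omega)
        rw [Nat.sub_add_cancel hlK] at h3
        have h4 := cnt_add_le E (l - K) (K + 1)
        rw [show l - K + (K + 1) = l + 1 by omega] at h4
        have h5 := cnt_le_succ D l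
        omega
    · rw [cnt_succ_of_notMem hl]
      have h1 := ih l (by omega)
      have h2 := cnt_mono D (show l + K ≤ l + 1 + K by omega)
      omega

/-- Sparse elements are filled up when passing from `A + [0, m]` to `A + [0, K]`, so their number
is controlled by the growth of the counting function. -/
lemma cnt_sparse_le {m K : ℕ} (hK : 1 ≤ K) (hmK : m ≤ K) (A : Set ℕ) (n : ℕ) :
    cnt (sparse m K A) n + 8 * cnt (fat m A) n ≤ 8 * (cnt (fat K A) n + K) := by
  have h1 := window_cover (E := sparse m K A) (D := fat K A \ fat m A) hK (by
    rintro a ⟨ha, ha'⟩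
    have h1 := cnt_diff (A := shift a (fat K A)) (B := shift a (fat m A))
      (fun x hx => fat_mono hmK A hx) K
    have h2 : cnt (shift a (fat K A)) K = K :=
      cnt_eq_of_forall_mem fun i _ hi => ⟨a, ha, i, hi, rfl⟩
    have h3 : cnt (shift a (fat K A) \ shift a (fat m A)) K ≤
        cnt (shift a (fat K A \ fat m A)) K := cnt_subset fun i _ _ hi => hi
    omega) n
  have h2 := cnt_diff (fat_mono hmK A) (n + K)
  have h3 := cnt_add_le (fat K A) n K
  have h4 := cnt_mono (fat m A) (show n ≤ n + K by omega)
  omega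

lemma cnt_sdiff_sparse (m K : ℕ) (A : Set ℕ) (n : ℕ) :
    cnt (A \ sparse m K A) n + cnt (sparse m K A) n = cnt A n :=
  cnt_diff (fun _ h => h.1) n

/-- If `t` is not in `P + Q`, then `P ∩ [1, K]` and the reflection of `Q ∩ [1, K]` about `t / 2` are
disjoint subsets of an interval. -/
lemma reflect_le {P Q : Set ℕ} {K t : ℕ} (h : ∀ p ∈ P, ∀ q ∈ Q, p + q ≠ t) :
    (cnt P K + cnt Q K : ℤ) ≤ max (K : ℤ) (t - 1) + 1 - min 1 ((t : ℤ) - K) := by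
  set U : Set ℤ := (fun i : ℕ => (i : ℤ)) '' (P ∩ Set.Icc 1 K) with hU
  set V : Set ℤ := (fun i : ℕ => (t : ℤ) - i) '' (Q ∩ Set.Icc 1 K) with hV
  have hUc : U.ncard = cnt P K := Set.ncard_image_of_injective _ (fun a b h => by simpa using h)
  have hVc : V.ncard = cnt Q K := Set.ncard_image_of_injective _ (fun a b h => by simpa using h)
  have hdisj : Disjoint U V := by
    rw [Set.disjoint_left]
    rintro _ ⟨p, hp, rfl⟩ ⟨q, hq, hpq⟩
    simp only at hpq
    exact h p hp.1 q hq.1 (by omega)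
  have hun : (U ∪ V).ncard = cnt P K + cnt Q K := by
    rw [Set.ncard_union_eq hdisj ((finite_inter P K).image _) ((finite_inter Q K).image _), hUc,
      hVc]
  have hsub : U ∪ V ⊆ Set.Icc (min 1 ((t : ℤ) - K)) (max (K : ℤ) (t - 1)) := by
    rintro _ (⟨p, ⟨_, hp1, hp2⟩, rfl⟩ | ⟨q, ⟨_, hq1, hq2⟩, rfl⟩) <;>
    · simp only [Set.mem_Icc]
      omega
  have hle := Set.ncard_le_ncard hsub (Set.finite_Icc _ _)
  rw [hun, ← Finset.coe_Icc, Set.ncard_coe_finset, Int.card_Icc] at hle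
  omega

/-- Two sets each filling three quarters of `[1, K]` represent every number in the middle part of
`[1, 2 K]` as a sum. -/
lemma window_sum {P Q : Set ℕ} {K t : ℕ} (hP : 3 * K ≤ 4 * cnt P K) (hQ : 3 * K ≤ 4 * cnt Q K)
    (ht1 : K + 2 < 2 * t) (ht2 : 2 * t ≤ 3 * K) : ∃ p ∈ P, ∃ q ∈ Q, p + q = t := by
  by_contra! hcon
  have := reflect_le (K := K) hcon
  omega

/-- Every step of fattening adds at most as many elements as the first one. -/
lemma cnt_fat_le (A : Set ℕ) (x j : ℕ) :
    cnt (fat j A) x ≤ cnt A x + j * cnt (fat 1 A \ A) x := by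
  induction j with
  | zero => simp [fat_zero]
  | succ j ih =>
    set D : Set ℕ := {y | ∃ d ∈ fat 1 A \ A, y = d + j} with hD
    have h1 : fat (j + 1) A ⊆ fat j A ∪ D := by
      rintro _ ⟨a, ha, r, hr, rfl⟩
      by_cases hrj : r ≤ j
      · exact Or.inl ⟨a, ha, r, hrj, rfl⟩
      · by_cases ha1 : a + 1 ∈ A
        · exact Or.inl ⟨a + 1, ha1, j, le_rfl, by omega⟩
        · exact Or.inr ⟨a + 1, ⟨⟨a, ha, 1, le_rfl, rfl⟩, ha1⟩, by omega⟩
    have h2 : cnt D x ≤ cnt (fat 1 A \ A) x := by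
      have hsub : D ∩ Set.Icc 1 x ⊆ (fun i => i + j) '' ((fat 1 A \ A) ∩ Set.Icc 1 x) := by
        rintro _ ⟨⟨d, hd, rfl⟩, hd1, hd2⟩
        refine ⟨d, ⟨hd, ?_, by omega⟩, rfl⟩
        -- `0` is not of the form `a + 1`, so it is not in `fat 1 A \ A`.
        rcases Nat.eq_zero_or_pos d with rfl | h
        · obtain ⟨⟨a, ha, r, hr, har⟩, h0⟩ := hd
          obtain rfl : a = 0 := by omega
          exact absurd ha h0
        · exact h
      exact (Set.ncard_le_ncard hsub ((finite_inter _ x).image _)).trans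
        (Set.ncard_image_le (finite_inter _ x))
    have h3 := cnt_union_le (fat j A) D x
    have h4 : cnt (fat (j + 1) A) x ≤ cnt (fat j A ∪ D) x := cnt_subset fun i _ _ hi => h1 hi
    rw [add_mul]
    omega

/-- Sums of non-sparse elements are, up to a bounded translation, witnesses. -/
lemma thickSum_translate {A B : Set ℕ} {m K R k : ℕ} (hK : 2 * (R + k + 2) ≤ K) :
    ∀ c ∈ thickSum R (A \ sparse m K A) (B \ sparse m K B), K + c ∈ witnesses A B (2 * m) k := by
  rintro _ ⟨a, ⟨ha, ha'⟩, b, ⟨hb, hb'⟩, r, hr, rfl⟩ w ⟨hw1, hw2⟩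
  have h1 : 3 * K ≤ 4 * cnt (shift a (fat m A)) K := by
    by_contra h; exact ha' ⟨ha, by omega⟩
  have h2 : 3 * K ≤ 4 * cnt (shift b (fat m B)) K := by
    by_contra h; exact hb' ⟨hb, by omega⟩
  obtain ⟨t, ht⟩ := Int.eq_ofNat_of_zero_le (show 0 ≤ w - a - b by push_cast at hw1; omega)
  push_cast at hw1 hw2
  obtain ⟨p, ⟨a₁, ha₁, s₁, hs₁, e₁⟩, q, ⟨b₁, hb₁, s₂, hs₂, e₂⟩, hpq⟩ :=
    window_sum (t := t) h1 h2 (by omega) (by omega)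
  refine ⟨a₁, ha₁, b₁, hb₁, (s₁ : ℤ) + s₂, ?_, by omega⟩
  rw [abs_le]; push_cast; omega

lemma cnt_thickSum_le {A B : Set ℕ} {m K R k : ℕ} (hK : 2 * (R + k + 2) ≤ K) (n : ℕ) :
    cnt (thickSum R (A \ sparse m K A) (B \ sparse m K B)) n ≤
      cnt (witnesses A B (2 * m) k) n + K := by
  have h1 : cnt (thickSum R (A \ sparse m K A) (B \ sparse m K B)) n ≤
      cnt (shift K (witnesses A B (2 * m) k)) n :=
    cnt_subset fun i _ _ hi => thickSum_translate hK i hi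
  have h2 := cnt_add (witnesses A B (2 * m) k) K n
  have h3 := cnt_add_le (witnesses A B (2 * m) k) n K
  rw [add_comm n K] at h3
  omega

/-! ### Densities along a filter -/

lemma eventually_density {A : Set ℕ} {α : ℝ} (hA : lowerDensityNat A = α) {ε : ℝ} (hε : 0 < ε) :
    ∃ c : ℕ, ∀ x : ℕ, (α - ε) * x - c ≤ cnt A x := by
  have hb : IsBoundedUnder (· ≥ ·) atTop (fun n : ℕ => (cnt A n : ℝ) / n) :=
    ⟨0, by simpa using ⟨0, fun n _ => by positivity⟩⟩
  have hlt : α - ε < liminf (fun n : ℕ => (cnt A n : ℝ) / n) atTop := by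
    have : liminf (fun n : ℕ => (cnt A n : ℝ) / n) atTop = α := hA
    linarith
  obtain ⟨c, hc⟩ := eventually_atTop.1 (eventually_lt_of_lt_liminf hlt hb)
  have hα : α ≤ 1 := by
    rw [← hA]
    refine liminf_le_of_frequently_le (Eventually.frequently (Eventually.of_forall fun n => ?_)) hb
    exact div_le_one_of_le₀ (by exact_mod_cast cnt_le A n) (by positivity)
  refine ⟨c, fun x => ?_⟩
  rcases lt_or_ge x c with h | h
  · have h1 : (x : ℝ) ≤ c := by exact_mod_cast h.le
    have h2 : (α - ε) * x ≤ 1 * x := by gcongr; linarith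
    have h3 : (0 : ℝ) ≤ cnt A x := by positivity
    linarith
  · have h0 : (0 : ℝ) ≤ c := by positivity
    rcases Nat.eq_zero_or_pos x with rfl | hx
    · simp
    · have h1 := hc x h
      have hx' : (0 : ℝ) < x := by exact_mod_cast hx
      rw [lt_div_iff₀ hx'] at h1
      linarith

/-- `A` has lower density at least `α`: for every `ε > 0`, the bound `|A ∩ [1, x]| ≥ (α - ε) x`
holds for all `x`, up to a constant depending on `ε`. -/
def HasLower (A : Set ℕ) (α : ℝ) : Prop :=
  ∀ ε : ℝ, 0 < ε → ∃ c : ℕ, ∀ x : ℕ, (α - ε) * x - c ≤ cnt A x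

lemma HasLower.mono {A A' : Set ℕ} {α α' : ℝ} (h : HasLower A α) (hA : A ⊆ A') (hα : α' ≤ α) :
    HasLower A' α' := by
  intro ε hε
  obtain ⟨c, hc⟩ := h ε hε
  refine ⟨c, fun x => ?_⟩
  have h1 : (cnt A x : ℝ) ≤ cnt A' x := by exact_mod_cast cnt_subset fun i _ _ hi => hA hi
  have h2 : (α' - ε) * x ≤ (α - ε) * x := by gcongr
  linarith [hc x]

/-- If replacing `m` by `K` enlarges `A + [0, m]` by little on `[1, n]`, then discarding the sparse
elements of `A` lowers its counting function by at most `e` on all of `[1, n]`. -/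
lemma nonsparse_lower {A : Set ℕ} {m K n x : ℕ} {a e : ℝ} (hK : 1 ≤ K) (hmK : m ≤ K)
    (hx : x ≤ n) (hA : a ≤ cnt A x)
    (hgrow : 8 * (cnt (fat K A) n + K : ℝ) ≤ 8 * cnt (fat m A) n + e) :
    a - e ≤ cnt (A \ sparse m K A) x := by
  have h1 := cnt_sparse_le hK hmK A n
  have h2 := cnt_sdiff_sparse m K A x
  have h3 := cnt_mono (sparse m K A) hx
  have h1' : (cnt (sparse m K A) n + 8 * cnt (fat m A) n : ℝ) ≤ 8 * (cnt (fat K A) n + K) := by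
    exact_mod_cast h1
  have h2' : (cnt (A \ sparse m K A) x + cnt (sparse m K A) x : ℝ) = cnt A x := by
    exact_mod_cast h2
  have h3' : (cnt (sparse m K A) x : ℝ) ≤ cnt (sparse m K A) n := by exact_mod_cast h3
  linarith

/-- Existence of densities along an ultrafilter. -/
lemma exists_density (U : Ultrafilter ℕ) (A : Set ℕ) :
    ∃ l : ℝ, Tendsto (fun n : ℕ => (cnt A n : ℝ) / n) U (nhds l) := by
  have hmem : ∀ n : ℕ, (cnt A n : ℝ) / n ∈ Set.Icc (0 : ℝ) 1 := fun n =>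
    ⟨by positivity, div_le_one_of_le₀ (by exact_mod_cast cnt_le A n) (by positivity)⟩
  obtain ⟨l, _, hl⟩ := (isCompact_Icc (a := (0 : ℝ)) (b := 1)).ultrafilter_le_nhds
    (U.map fun n : ℕ => (cnt A n : ℝ) / n)
    (by rw [le_principal_iff]; exact Filter.mem_map.2 (univ_mem' hmem))
  exact ⟨l, hl⟩

/-- The density of `A` along the ultrafilter `U`. -/
noncomputable def dens (U : Ultrafilter ℕ) (A : Set ℕ) : ℝ := (exists_density U A).choose

lemma tendsto_dens (U : Ultrafilter ℕ) (A : Set ℕ) :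
    Tendsto (fun n : ℕ => (cnt A n : ℝ) / n) U (nhds (dens U A)) :=
  (exists_density U A).choose_spec

lemma eventually_dens_lower {U : Ultrafilter ℕ} (hU : (U : Filter ℕ) ≤ atTop) (A : Set ℕ)
    {ε : ℝ} (hε : 0 < ε) :
    ∀ᶠ n : ℕ in U, (dens U A - ε) * n ≤ cnt A n := by
  filter_upwards [(tendsto_dens U A).eventually_const_lt (show dens U A - ε < _ by linarith),
    hU (eventually_ge_atTop 1)] with n h hn
  have hn' : (0 : ℝ) < n := by exact_mod_cast hn
  rw [lt_div_iff₀ hn'] at h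
  exact h.le

lemma eventually_dens_upper {U : Ultrafilter ℕ} (hU : (U : Filter ℕ) ≤ atTop) (A : Set ℕ)
    {ε : ℝ} (hε : 0 < ε) :
    ∀ᶠ n : ℕ in U, (cnt A n : ℝ) ≤ (dens U A + ε) * n := by
  filter_upwards [(tendsto_dens U A).eventually_lt_const (show _ < dens U A + ε by linarith),
    hU (eventually_ge_atTop 1)] with n h hn
  have hn' : (0 : ℝ) < n := by exact_mod_cast hn
  rw [div_lt_iff₀ hn'] at h
  exact h.le

lemma dens_mono {U : Ultrafilter ℕ} {A B : Set ℕ} (h : A ⊆ B) : dens U A ≤ dens U B := by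
  refine le_of_tendsto_of_tendsto' (tendsto_dens U A) (tendsto_dens U B) fun n => ?_
  have : cnt A n ≤ cnt B n := cnt_subset fun i _ _ hi => h hi
  gcongr

lemma dens_le_one (U : Ultrafilter ℕ) (A : Set ℕ) : dens U A ≤ 1 :=
  le_of_tendsto' (tendsto_dens U A) fun n =>
    div_le_one_of_le₀ (by exact_mod_cast cnt_le A n) (by positivity)

lemma HasLower.le_dens {U : Ultrafilter ℕ} (hU : (U : Filter ℕ) ≤ atTop) {A : Set ℕ} {α : ℝ}
    (h : HasLower A α) : α ≤ dens U A := by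
  refine le_of_forall_pos_le_add fun ε hε => ?_
  obtain ⟨c, hc⟩ := h (ε / 2) (by linarith)
  refine ge_of_tendsto ((tendsto_dens U A).add_const ε) ?_
  obtain ⟨M, hM⟩ := exists_nat_gt (c / (ε / 2))
  filter_upwards [hU (eventually_ge_atTop (M + 1))] with n hn
  have hn' : (0 : ℝ) < n := by exact_mod_cast (by omega)
  have hMn : (M : ℝ) ≤ n := by exact_mod_cast (by omega)
  rw [div_lt_iff₀ (by linarith)] at hM
  have h1 := hc n
  have h2 : (M : ℝ) * (ε / 2) ≤ n * (ε / 2) := by gcongr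
  have h3 : α - ε ≤ (cnt A n : ℝ) / n := by
    rw [le_div_iff₀ hn']; nlinarith
  linarith

/-- The densities of `A + [0, m]` increase to a limit, so they stop growing by more than `ε`. -/
lemma exists_saturated (U : Ultrafilter ℕ) (A : Set ℕ) {ε : ℝ} (hε : 0 < ε) :
    ∃ m, ∀ l, m ≤ l → ∀ K, dens U (fat K A) ≤ dens U (fat l A) + ε := by
  have hbdd : BddAbove (Set.range fun m => dens U (fat m A)) :=
    ⟨1, by rintro _ ⟨m, rfl⟩; exact dens_le_one U _⟩
  obtain ⟨_, ⟨m, rfl⟩, hm⟩ := exists_lt_of_lt_csSup (Set.range_nonempty _)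
    (show sSup (Set.range fun m => dens U (fat m A)) - ε < _ by linarith)
  refine ⟨m, fun l hl K => ?_⟩
  have h1 := le_csSup hbdd ⟨K, rfl⟩
  have h2 : dens U (fat m A) ≤ dens U (fat l A) := dens_mono (fat_mono hl A)
  simp only at h1 hm
  linarith

lemma eventually_nonsparse {U : Ultrafilter ℕ} (hU : (U : Filter ℕ) ≤ atTop) {A : Set ℕ} {α δ : ℝ}
    (h : HasLower A α) (hδ : 0 < δ) {m K : ℕ} (hK : 1 ≤ K) (hmK : m ≤ K)
    (hsat : dens U (fat K A) ≤ dens U (fat m A) + δ / 32) :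
    ∀ᶠ N : ℕ in U, (∀ x ≤ N, α * x - δ * N ≤ cnt (A \ sparse m K A) x) ∧
      (cnt A N : ℝ) - δ * N ≤ cnt (A \ sparse m K A) N := by
  obtain ⟨c, hc⟩ := h (δ / 8) (by linarith)
  obtain ⟨M, hM⟩ := exists_nat_gt ((8 * c + 32 * K) / δ)
  rw [div_lt_iff₀ hδ] at hM
  filter_upwards [hU (eventually_ge_atTop M),
    eventually_dens_upper hU (fat K A) (show 0 < δ / 64 by linarith),
    eventually_dens_lower hU (fat m A) (show 0 < δ / 64 by linarith)] with N hN h1 h2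
  have hMN : (M : ℝ) * δ ≤ N * δ := by gcongr
  have hN0 : (0 : ℝ) ≤ N := by positivity
  have hc0 : (0 : ℝ) ≤ c := by positivity
  have hK0 : (0 : ℝ) ≤ K := by positivity
  have hs : dens U (fat K A) * N ≤ (dens U (fat m A) + δ / 32) * N := by gcongr
  have hgrow : 8 * (cnt (fat K A) N + K : ℝ) ≤ 8 * cnt (fat m A) N + 3 * δ / 4 * N := by
    nlinarith
  refine ⟨fun x hx => ?_, ?_⟩
  · have h3 := nonsparse_lower hK hmK hx (hc x) hgrow
    have hxN : δ * (x : ℝ) ≤ δ * N := by gcongr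
    nlinarith
  · have h3 := nonsparse_lower hK hmK le_rfl le_rfl hgrow
    nlinarith

/-! ### The three cases -/

/-- If `A` has more density along `U` than its lower density, then the excess pays for all errors,
once `m` is so large that further fattening gains almost nothing. -/
lemma case_excess {U : Ultrafilter ℕ} (hU : (U : Filter ℕ) ≤ atTop) {A B : Set ℕ} {α β : ℝ}
    (hα : 0 < α) (hβ : 0 < β) (hαβ : α + β < 1) (hA : HasLower A α) (hB : HasLower B β)
    (hex : α < dens U A) :
    ∃ m, ∀ k, ∀ᶠ N : ℕ in U, (α + β) * N ≤ cnt (witnesses A B m k) N := by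
  obtain ⟨η, hη, hη1, hη2⟩ : ∃ η > 0, α + 3 * η ≤ dens U A ∧ α + β + η ≤ 1 :=
    ⟨min ((dens U A - α) / 3) (1 - α - β), lt_min (by linarith) (by linarith),
      by linarith [min_le_left ((dens U A - α) / 3) (1 - α - β)],
      by linarith [min_le_right ((dens U A - α) / 3) (1 - α - β)]⟩
  obtain ⟨δ₀, hδ₀, R, N₀, κ, hκ, hmain⟩ := sumset_count_excess hα hβ hη hη2
  obtain ⟨δ, hδ, hδδ₀, hδη⟩ : ∃ δ > 0, δ ≤ δ₀ ∧ δ ≤ η :=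
    ⟨min δ₀ η, by positivity, min_le_left _ _, min_le_right _ _⟩
  obtain ⟨m₁, hm₁⟩ := exists_saturated U A (show 0 < δ / 32 by linarith)
  obtain ⟨m₂, hm₂⟩ := exists_saturated U B (show 0 < δ / 32 by linarith)
  set m := max m₁ m₂ with hm
  refine ⟨2 * m, fun k => ?_⟩
  set K := max m (2 * (R + k + 2)) with hK
  have hmK : m ≤ K := le_max_left _ _
  have hRK : 2 * (R + k + 2) ≤ K := le_max_right _ _
  obtain ⟨M, hM⟩ := exists_nat_gt (K / κ)
  rw [div_lt_iff₀ hκ] at hM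
  filter_upwards [hU (eventually_ge_atTop N₀), hU (eventually_ge_atTop M),
    eventually_nonsparse hU hA hδ (by omega) hmK (hm₁ m (le_max_left _ _) K),
    eventually_nonsparse hU hB hδ (by omega) hmK (hm₂ m (le_max_right _ _) K),
    eventually_dens_lower hU A hη] with N hN₀ hMN h1 h2 h3
  have hN0 : (0 : ℝ) ≤ N := by positivity
  have hδN : δ * N ≤ δ₀ * N := by gcongr
  have hδN' : δ * N ≤ η * N := by gcongr
  have hdN : (α + 3 * η) * N ≤ dens U A * N := by gcongr
  have h4 := hmain N hN₀ _ _ (fun x hx => by linarith [h1.1 x hx])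
    (fun x hx => by linarith [h2.1 x hx]) (by linarith [h1.2])
  have h5 : (cnt (thickSum R (A \ sparse m K A) (B \ sparse m K B)) N : ℝ) ≤
      cnt (witnesses A B (2 * m) k) N + K := by exact_mod_cast cnt_thickSum_le hRK N
  have h6 : (M : ℝ) * κ ≤ N * κ := by gcongr
  linarith

/-- If fattening `A` and `B` gains no density along `U` at all, then almost all elements of `A` and
`B` are followed by long intervals and no fattening is needed. -/
lemma case_saturated {U : Ultrafilter ℕ} (hU : (U : Filter ℕ) ≤ atTop) {A B : Set ℕ} {α β : ℝ}
    (hα : 0 < α) (hβ : 0 < β) (hαβ : α + β ≤ 1) (hA : HasLower A α) (hB : HasLower B β)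
    (hsA : ∀ K, dens U (fat K A) ≤ dens U A) (hsB : ∀ K, dens U (fat K B) ≤ dens U B)
    (k : ℕ) {ε : ℝ} (hε : 0 < ε) :
    ∀ᶠ N : ℕ in U, (α + β - ε) * N ≤ cnt (witnesses A B 0 k) N := by
  obtain ⟨δ, hδ, R, N₀, hmain⟩ := sumset_count hα hβ hαβ (show 0 < ε / 2 by linarith)
  set K := 2 * (R + k + 2) with hK
  obtain ⟨M, hM⟩ := exists_nat_gt (K / (ε / 2))
  rw [div_lt_iff₀ (by linarith)] at hM
  filter_upwards [hU (eventually_ge_atTop N₀), hU (eventually_ge_atTop M),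
    eventually_nonsparse hU hA hδ (m := 0) (K := K) (by omega) (by omega)
      (by rw [fat_zero]; linarith [hsA K]),
    eventually_nonsparse hU hB hδ (m := 0) (K := K) (by omega) (by omega)
      (by rw [fat_zero]; linarith [hsB K])] with N hN₀ hMN h1 h2
  have h4 := hmain N N hN₀ le_rfl _ _ h1.1 h2.1
  have h5 : (cnt (thickSum R (A \ sparse 0 K A) (B \ sparse 0 K B)) N : ℝ) ≤
      cnt (witnesses A B 0 k) N + K := by exact_mod_cast cnt_thickSum_le (m := 0) hK.ge N
  have h6 : (M : ℝ) * (ε / 2) ≤ N * (ε / 2) := by gcongr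
  linarith

/-- If `x ∉ A + B + [0, 1]`, then `A + [0, 1]` and `x - B` are disjoint; if in addition the lower
densities of `A` and `B` add up to `1`, then `A + [0, K]` hardly exceeds `A` on `[1, x]`. -/
lemma growth_of_gap {A B : Set ℕ} {α β θ : ℝ} {c c' x : ℕ} (hαβ : α + β = 1)
    (hA : (α - θ) * x - c ≤ cnt A x) (hB : (β - θ) * x - c' ≤ cnt B x)
    (hx : x ∉ thickSum 1 A B) (K : ℕ) :
    (cnt (fat K A) x : ℝ) ≤ cnt A x + K * (2 * θ * x + c + c' + 1) := by
  have h1 := reflect_le (P := fat 1 A) (Q := B) (K := x) (t := x) (by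
    rintro _ ⟨a, ha, r, hr, rfl⟩ b hb hab
    exact hx ⟨a, ha, b, hb, r, hr, by omega⟩)
  have h2 : cnt (fat 1 A) x + cnt B x ≤ x + 1 := by omega
  have h3 := cnt_diff (subset_fat 1 A) x
  have h4 : (cnt (fat 1 A \ A) x + cnt A x + cnt B x : ℝ) ≤ x + 1 := by
    exact_mod_cast (by omega)
  have h5 : (cnt (fat K A) x : ℝ) ≤ cnt A x + K * cnt (fat 1 A \ A) x := by
    exact_mod_cast cnt_fat_le A x K
  have h6 : (K : ℝ) * cnt (fat 1 A \ A) x ≤ K * (2 * θ * x + c + c' + 1) := by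
    gcongr
    obtain rfl : β = 1 - α := by linarith
    linarith
  linarith

/-- If the lower densities add up to `1`, then `m = 1` suffices: the elements beyond the largest
`x ≤ N` outside `A + B + [0, 1]` are no problem, and up to `x` there are few
sparse elements. -/
lemma case_full {A B : Set ℕ} {α β : ℝ} (hα : 0 < α) (hβ : 0 < β) (hαβ : α + β = 1)
    (hA : HasLower A α) (hB : HasLower B β) (k : ℕ) {ε : ℝ} (hε : 0 < ε) :
    ∀ᶠ N : ℕ in atTop, (1 - ε) * N ≤ cnt (witnesses A B 1 k) N := by
  classical
  obtain ⟨δ, hδ, R, N₀, hmain⟩ := sumset_count hα hβ hαβ.le (show 0 < ε / 2 by linarith)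
  set K := 2 * (R + k + 2) with hK
  have hK1 : 1 ≤ K := by omega
  have hK1' : (1 : ℝ) ≤ K := by exact_mod_cast hK1
  have hθ : 0 < δ / (64 * K) := by positivity
  obtain ⟨θ, hθ0, hθK⟩ : ∃ θ > 0, 64 * K * θ = δ := ⟨_, hθ, by field_simp⟩
  obtain ⟨c₁, hc₁⟩ := hA θ hθ0
  obtain ⟨c₂, hc₂⟩ := hB θ hθ0
  obtain ⟨M, hM⟩ := exists_nat_gt (8 * (8 * K * (c₁ + c₂ + 2)) / δ)
  rw [div_lt_iff₀ hδ] at hM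
  obtain ⟨M', hM'⟩ := exists_nat_gt ((K + 2 * k) / (ε / 2))
  rw [div_lt_iff₀ (by linarith)] at hM'
  filter_upwards [eventually_ge_atTop N₀, eventually_ge_atTop M, eventually_ge_atTop M']
    with N hN₀ hMN hMN'
  have hMδ : (M : ℝ) * δ ≤ N * δ := by gcongr
  have hMε : (M' : ℝ) * (ε / 2) ≤ N * (ε / 2) := by gcongr
  have hN0 : (0 : ℝ) ≤ N := by positivity
  have hcK : (c₁ + c₂ : ℝ) ≤ 8 * K * (c₁ + c₂ + 2) := by
    have h1 : (0 : ℝ) ≤ c₁ := by positivity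
    have h2 : (0 : ℝ) ≤ c₂ := by positivity
    nlinarith
  have hθδ : θ ≤ δ / 64 := by nlinarith
  set P : ℕ → Prop := fun y => y = 0 ∨ y ∉ thickSum 1 A B with hP
  set x := Nat.findGreatest P N with hx
  have hxN : x ≤ N := Nat.findGreatest_le N
  have hxP : P x := Nat.findGreatest_spec (P := P) (Nat.zero_le N) (Or.inl rfl)
  have hxmax : ∀ y, x < y → y ≤ N → y ∈ thickSum 1 A B := by
    intro y hy hyN
    by_contra h
    exact Nat.findGreatest_is_greatest hy hyN (Or.inr h)
  have hlow : (x : ℝ) - ε / 2 * N - K ≤ cnt (witnesses A B 1 k) x := by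
    rcases hxP with h0 | hgap
    · rw [h0]
      have : 0 ≤ ε / 2 * N := by positivity
      simp
      linarith
    · have hxN' : (x : ℝ) ≤ N := by exact_mod_cast hxN
      have hKx : 64 * (K * θ * x) ≤ δ * N := by
        calc 64 * (K * θ * x) = δ * x := by rw [← hθK]; ring
          _ ≤ δ * N := by gcongr
      have hgap' : x ∉ thickSum 1 B A := by
        rintro ⟨b, hb, a, ha, r, hr, h⟩
        exact hgap ⟨a, ha, b, hb, r, hr, by omega⟩
      have hgA := growth_of_gap hαβ (hc₁ x) (hc₂ x) hgap K
      have hgB := growth_of_gap (by linarith) (hc₂ x) (hc₁ x) hgap' K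
      have hsA : ∀ y ≤ x, α * y - δ * N ≤ cnt (A \ sparse 0 K A) y := by
        intro y hy
        have h1 := nonsparse_lower (e := δ / 2 * N) hK1 (Nat.zero_le K) hy (hc₁ y)
          (by rw [fat_zero]; nlinarith)
        have hyN : θ * (y : ℝ) ≤ δ / 64 * N := by gcongr; exact_mod_cast hy.trans hxN
        have h2 : (0 : ℝ) ≤ c₂ := by positivity
        nlinarith
      have hsB : ∀ y ≤ x, β * y - δ * N ≤ cnt (B \ sparse 0 K B) y := by
        intro y hy
        have h1 := nonsparse_lower (e := δ / 2 * N) hK1 (Nat.zero_le K) hy (hc₂ y)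
          (by rw [fat_zero]; nlinarith)
        have hyN : θ * (y : ℝ) ≤ δ / 64 * N := by gcongr; exact_mod_cast hy.trans hxN
        have h2 : (0 : ℝ) ≤ c₁ := by positivity
        nlinarith
      have h4 := hmain N x hN₀ hxN _ _ hsA hsB
      have h5 : (cnt (thickSum R (A \ sparse 0 K A) (B \ sparse 0 K B)) x : ℝ) ≤
          cnt (witnesses A B 0 k) x + K := by exact_mod_cast cnt_thickSum_le (m := 0) hK.ge x
      have h6 : (cnt (witnesses A B 0 k) x : ℝ) ≤ cnt (witnesses A B 1 k) x := by
        exact_mod_cast cnt_subset fun i _ _ hi => witnesses_mono (Nat.zero_le 1) A B k hi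
      rw [hαβ] at h4
      linarith
  have hhigh : cnt (witnesses A B 1 k) x + N ≤ cnt (witnesses A B 1 k) N + x + 2 * k := by
    rcases lt_or_ge N (x + k + k) with h | h
    · have := cnt_mono (witnesses A B 1 k) hxN
      omega
    · obtain ⟨l, hl⟩ := Nat.exists_eq_add_of_le h
      have h1 : cnt (shift (x + k) (witnesses A B 1 k)) l = l := by
        refine cnt_eq_of_forall_mem fun i hi1 hi2 => ?_
        rintro w ⟨hw1, hw2⟩
        push_cast at hw1 hw2
        obtain ⟨y, rfl⟩ := Int.eq_ofNat_of_zero_le (show 0 ≤ w by omega)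
        obtain ⟨a, ha, b, hb, r, hr, hy⟩ := hxmax y (by omega) (by omega)
        refine ⟨a, ha, b, hb, r, ?_, by rw [hy]; push_cast; ring⟩
        rw [abs_le]; push_cast; omega
      have h2 := cnt_add (witnesses A B 1 k) (x + k) l
      have h3 := cnt_mono (witnesses A B 1 k) (show x ≤ x + k by omega)
      have h4 := cnt_mono (witnesses A B 1 k) (show x + k + l ≤ N by omega)
      omega
  have hhigh' : (cnt (witnesses A B 1 k) x + N : ℝ) ≤ cnt (witnesses A B 1 k) N + x + 2 * k := by
    exact_mod_cast hhigh
  linarith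

/-- Passage from counts along a finer filter to the upper limit. -/
lemma le_limsup_of_eventually {F G : Filter ℕ} [G.NeBot] (hGF : G ≤ F) (hG : G ≤ atTop)
    (W : Set ℕ) {r : ℝ} (h : ∀ ε > 0, ∀ᶠ N : ℕ in G, (r - ε) * N ≤ cnt W N) :
    r ≤ limsup (fun n : ℕ => (cnt W n : ℝ) / n) F := by
  refine le_of_forall_pos_le_add fun ε hε => ?_
  rw [← sub_le_iff_le_add]
  have hev : ∀ᶠ N : ℕ in G, r - ε ≤ (cnt W N : ℝ) / N := by
    filter_upwards [h ε hε, hG (eventually_ge_atTop 1)] with N hN h1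
    rwa [le_div_iff₀ (by exact_mod_cast h1)]
  refine le_limsup_of_frequently_le (hev.frequently.filter_mono hGF) ⟨1, ?_⟩
  simp only [eventually_map]
  exact Eventually.of_forall fun n =>
    div_le_one_of_le₀ (by exact_mod_cast cnt_le W n) (by positivity)

lemma HasLower.of_lowerDensityNat {A : Set ℕ} {α : ℝ} (h : lowerDensityNat A = α) : HasLower A α :=
  fun _ hε => eventually_density h hε

/-- The theorem for counting functions along an ultrafilter. -/
lemma exists_level {U : Ultrafilter ℕ} (hU : (U : Filter ℕ) ≤ atTop) {A B : Set ℕ} {α β : ℝ}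
    (hα : 0 < α) (hβ : 0 < β) (hA : HasLower A α) (hB : HasLower B β) :
    ∃ m, ∀ k, ∀ ε > 0, ∀ᶠ N : ℕ in U, (min (α + β) 1 - ε) * N ≤ cnt (witnesses A B m k) N := by
  rcases le_or_gt 1 (α + β) with h1 | h1
  · refine ⟨1, fun k ε hε => ?_⟩
    rw [min_eq_right h1]
    have hpos : 0 < α + β := by linarith
    exact hU (case_full (div_pos hα hpos) (div_pos hβ hpos) (by field_simp)
      (hA.mono le_rfl (div_le_self hα.le h1)) (hB.mono le_rfl (div_le_self hβ.le h1)) k hε)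
  · rw [min_eq_left h1.le]
    have hsmall : ∀ {W W' : Set ℕ} {ε : ℝ}, 0 < ε → W ⊆ W' →
        (∀ᶠ N : ℕ in U, (α + β) * N ≤ cnt W N) →
        ∀ᶠ N : ℕ in U, (α + β - ε) * N ≤ cnt W' N := by
      intro W W' ε hε hW h
      filter_upwards [h] with N hN
      have h2 : (cnt W N : ℝ) ≤ cnt W' N := by exact_mod_cast cnt_subset fun i _ _ hi => hW hi
      have h3 : 0 ≤ ε * N := by positivity
      linarith
    by_cases hexA : ∃ l, α < dens U (fat l A)
    · obtain ⟨l, hl⟩ := hexA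
      obtain ⟨m, hm⟩ := case_excess hU hα hβ h1 (hA.mono (subset_fat l A) le_rfl) hB hl
      exact ⟨m + l, fun k ε hε => hsmall hε (witnesses_fat A B l m k) (hm k)⟩
    by_cases hexB : ∃ l, β < dens U (fat l B)
    · obtain ⟨l, hl⟩ := hexB
      obtain ⟨m, hm⟩ := case_excess hU hβ hα (by linarith) (hB.mono (subset_fat l B) le_rfl) hA hl
      refine ⟨m + l, fun k ε hε => hsmall hε ?_ (by simpa only [add_comm] using hm k)⟩
      rw [witnesses_comm A B]
      simpa only [add_comm] using witnesses_fat B A l m k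
    push Not at hexA hexB
    exact ⟨0, fun k ε hε => case_saturated hU hα hβ h1.le hA hB
      (fun K => (hexA K).trans (hA.le_dens hU)) (fun K => (hexB K).trans (hB.le_dens hU)) k hε⟩

end SumsetSyndetic

theorem stmt_3 (A B : Set ℕ) (α β : ℝ)
    (hA : lowerDensityNat A = α) (hα : 0 < α)
    (hB : lowerDensityNat B = β) (hβ : 0 < β) :
    ∀ S : Set ℕ, S.Infinite → ∃ m : ℕ, ∀ k : ℕ,
      min (α + β) 1 ≤ limsup (fun n : ℕ =>
        (Set.ncard {z : ℕ | z ∈ Set.Icc 1 n ∧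
          Set.Icc ((z : ℤ) - k) ((z : ℤ) + k) ⊆ sumsetPlusInterval A B m} : ℝ) / n)
        (atTop ⊓ 𝓟 S) := by
  intro S hS
  have hne : (atTop ⊓ 𝓟 S).NeBot :=
    frequently_mem_iff_neBot.1 (Nat.frequently_atTop_iff_infinite.2 hS)
  have hle := Ultrafilter.of_le (atTop ⊓ 𝓟 S)
  have hU := hle.trans inf_le_left
  obtain ⟨m, hm⟩ := SumsetSyndetic.exists_level hU hα hβ
    (.of_lowerDensityNat hA) (.of_lowerDensityNat hB)
  refine ⟨m, fun k => ?_⟩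
  have h := SumsetSyndetic.le_limsup_of_eventually hle hU
    (SumsetSyndetic.witnesses A B m k) (hm k)
  have hset : ∀ n : ℕ, {z : ℕ | z ∈ Set.Icc 1 n ∧
      Set.Icc ((z : ℤ) - k) ((z : ℤ) + k) ⊆ sumsetPlusInterval A B m} =
      SumsetSyndetic.witnesses A B m k ∩ Set.Icc 1 n := fun n => Set.inter_comm _ _
  simp only [hset]
  exact h
end
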